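/- For every real K > 0 there exist constants c₁ > 0 and c₂ > 0, depending only on K, such that the following holds. If A ⊆ ℤ is a finite nonempty set with |A+A| ≤ K·|A|, then there exists a subset A' ⊆ A with |A'| ≥ c₂·|A| and EI(A') ≥ c₁·|A'|³. -/

import Mathlib

/-!
Ruzsa's model lemma maps a dense piece of `A` by a Freiman isomorphism of order `6` onto a dense
subset `T` of a cyclic group of order `O(|A|)`. By Bogolyubov's argument `T + T - T - T` contains a
Bohr set of bounded dimension, so the inverse isomorphism, applied to differences, extends to a
partial homomorphism `ψ` on a ball of a lattice of bounded rank, and `ψ` orders this lattice.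

The order is compressed by induction on the dimension. The least positive step `e` of the order
is quotiented out; its multiples are spaced apart by a linear functional that equals `1` at `e`, and
every other class by the compression obtained in the quotient. Hence some dense `A₁ ⊆ A` has a
Freiman homomorphism `f` to `[0, O(|A|)]` with gaps at least `1` which preserves the order of `ℤ`.

For small `ε > 0` let `g = ⌊ε f⌋`. Deleting each element whose rank would overtake `g` leaves a set
`A'` whose rank function agrees with `g` on a set `B` of positive density. The graph of `g` over `B`
has doubling comparable to that of `B`, since `ε f` is a Freiman homomorphism, so by Cauchy–Schwarz
it has large additive energy; and it is part of the graph of the rank function of `A'`, whose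
additive energy is the indexed energy.
-/

open Pointwise

/-- Indexed energy of a finite set of integers: writing `A = {a₁ < a₂ < ⋯ < aₙ}`,
the number of quadruples of indices `(i,j,k,l)` with `aᵢ + aⱼ = aₖ + aₗ` and
`i + j = k + l`. -/
def indexedEnergy (A : Finset ℤ) : ℕ :=
  (Finset.univ.filter
    (fun q : Fin A.card × Fin A.card × Fin A.card × Fin A.card =>
      ((A.orderIsoOfFin rfl q.1 : ℤ) + (A.orderIsoOfFin rfl q.2.1 : ℤ) =
        (A.orderIsoOfFin rfl q.2.2.1 : ℤ) + (A.orderIsoOfFin rfl q.2.2.2 : ℤ)) ∧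
      ((q.1 : ℕ) + (q.2.1 : ℕ) = (q.2.2.1 : ℕ) + (q.2.2.2 : ℕ)))).card

section Bogolyubov

variable {G : Type*} [AddCommGroup G]

/-- The squared absolute value of the Fourier transform of the indicator function of `T`. -/
noncomputable def fourierSq (T : Finset G) (χ : AddChar G ℂ) : ℝ :=
  ‖∑ t ∈ T, χ t‖ ^ 2

lemma fourierSq_nonneg (T : Finset G) (χ : AddChar G ℂ) : 0 ≤ fourierSq T χ :=
  sq_nonneg _

lemma fourierSq_zero (T : Finset G) : fourierSq T 0 = (T.card : ℝ) ^ 2 := by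
  simp [fourierSq]

lemma ofReal_fourierSq [Finite G] (T : Finset G) (χ : AddChar G ℂ) :
    (fourierSq T χ : ℂ) = ∑ p ∈ T ×ˢ T, χ (p.1 - p.2) := by
  rw [fourierSq, Complex.ofReal_pow, ← Complex.mul_conj', map_sum, Finset.sum_mul_sum,
    Finset.sum_product]
  simp only [sub_eq_add_neg, AddChar.map_add_eq_mul, AddChar.map_neg_eq_conj]

lemma sum_addChar_sum [Fintype G] [DecidableEq G] {ι : Type*} (s : Finset ι) (f : ι → G) :
    ∑ χ : AddChar G ℂ, ∑ i ∈ s, χ (f i) = Fintype.card G * (s.filter fun i ↦ f i = 0).card := by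
  rw [Finset.sum_comm]
  simp only [AddChar.sum_apply_eq_ite, Finset.sum_ite, Finset.sum_const_zero, add_zero,
    Finset.sum_const, nsmul_eq_mul]
  ring

lemma sum_fourierSq_sq_mul_eq_zero [Finite G] [DecidableEq G] {T : Finset G}
    {g : G} (hg : g ∉ T + T - T - T) : ∑ χ, (fourierSq T χ) ^ 2 * (χ g).re = 0 := by
  cases nonempty_fintype G
  have hterm (χ : AddChar G ℂ) : ((fourierSq T χ : ℂ)) ^ 2 * χ (-g) =
      ∑ q ∈ (T ×ˢ T) ×ˢ T ×ˢ T, χ (q.1.1 - q.1.2 + (q.2.1 - q.2.2) - g) := by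
    rw [ofReal_fourierSq, sq, Finset.sum_mul_sum, ← Finset.sum_product', Finset.sum_mul]
    simp only [sub_eq_add_neg _ g, AddChar.map_add_eq_mul]
  have hsum : ∑ χ : AddChar G ℂ, (fourierSq T χ : ℂ) ^ 2 * χ (-g) = 0 := by
    simp only [hterm, sum_addChar_sum]
    rw [Finset.filter_false_of_mem, Finset.card_empty, Nat.cast_zero, mul_zero]
    rintro ⟨⟨a, b⟩, c, d⟩ hq h0
    simp only [Finset.mem_product] at hq
    refine hg ?_
    rw [← sub_eq_zero.1 h0, show a - b + (c - d) = a + c - b - d by abel]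
    exact Finset.sub_mem_sub (Finset.sub_mem_sub (Finset.add_mem_add hq.1.1 hq.2.1) hq.1.2) hq.2.2
  have hre := congrArg Complex.re hsum
  rw [Complex.re_sum, Complex.zero_re] at hre
  simpa [AddChar.map_neg_eq_conj, ← Complex.ofReal_pow, Complex.re_ofReal_mul] using hre

variable [Fintype G]

lemma sum_fourierSq (T : Finset G) : ∑ χ, fourierSq T χ = Fintype.card G * T.card := by
  classical
  have hdiag : (T ×ˢ T).filter (fun p ↦ p.1 - p.2 = 0) = T.diag := by
    ext p
    simp only [sub_eq_zero, Finset.mem_filter, Finset.mem_product, Finset.mem_diag]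
    grind
  rw [← Complex.ofReal_inj, Complex.ofReal_sum]
  simp only [ofReal_fourierSq, sum_addChar_sum, hdiag, Finset.diag_card]
  norm_cast

/-- The characters at which the Fourier transform of `T` is large. The threshold is half the one
making the trivial character's contribution to the fourth moment balance Parseval's identity. -/
noncomputable def largeSpectrum (T : Finset G) : Finset (AddChar G ℂ) :=
  Finset.univ.filter fun χ ↦ (T.card : ℝ) ^ 3 / (2 * Fintype.card G) ≤ fourierSq T χ

lemma card_largeSpectrum_mul_le (T : Finset G) :
    ((largeSpectrum T).card : ℝ) * (T.card : ℝ) ^ 2 ≤ 2 * (Fintype.card G : ℝ) ^ 2 := by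
  obtain rfl | hT := T.eq_empty_or_nonempty
  · simp
  have hTcard : (0 : ℝ) < T.card := mod_cast hT.card_pos
  have hle : (largeSpectrum T).card * ((T.card : ℝ) ^ 3 / (2 * Fintype.card G)) ≤
      Fintype.card G * T.card := by
    rw [← sum_fourierSq, ← nsmul_eq_mul]
    exact (Finset.card_nsmul_le_sum _ _ _ fun χ hχ ↦ (Finset.mem_filter.1 hχ).2).trans
      (Finset.sum_le_univ_sum_of_nonneg (fourierSq_nonneg T))
  rw [mul_div_assoc', div_le_iff₀ (by positivity)] at hle
  refine le_of_mul_le_mul_right ?_ hTcard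
  linarith

-- If `g ∉ T + T - T - T`, the weighted sum of `Re χ(g)` with weights `fourierSq ^ 2` vanishes; but
-- the trivial character contributes more than the small spectrum can cancel.
theorem mem_add_sub_sub_of_re_nonneg [DecidableEq G] {T : Finset G} (hT : T.Nonempty) {g : G}
    (hg : ∀ χ ∈ largeSpectrum T, 0 ≤ (χ g).re) : g ∈ T + T - T - T := by
  by_contra hmem
  have hTcard : (0 : ℝ) < T.card := mod_cast hT.card_pos
  set θ := (T.card : ℝ) ^ 3 / (2 * Fintype.card G) with hθ
  have hθ0 : 0 ≤ θ := by positivity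
  have hterm (χ : AddChar G ℂ) :
      0 ≤ fourierSq T χ ^ 2 * (χ g).re + θ * fourierSq T χ := by
    have hχ := fourierSq_nonneg T χ
    by_cases hlarge : χ ∈ largeSpectrum T
    · have := hg χ hlarge
      positivity
    · have hre : -1 ≤ (χ g).re := by
        have := Complex.abs_re_le_norm (χ g)
        rw [AddChar.norm_apply, abs_le] at this
        exact this.1
      have hsmall : fourierSq T χ ≤ θ :=
        (not_le.1 fun h ↦ hlarge (Finset.mem_filter.2 ⟨Finset.mem_univ _, h⟩)).le
      nlinarith [mul_nonneg hχ (sub_nonneg.2 hsmall), mul_nonneg (sq_nonneg (fourierSq T χ))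
        (neg_le_iff_add_nonneg.1 hre)]
  have htrivial := Finset.single_le_sum (fun χ _ ↦ hterm χ) (Finset.mem_univ 0)
  rw [Finset.sum_add_distrib, sum_fourierSq_sq_mul_eq_zero hmem, ← Finset.mul_sum, sum_fourierSq,
    fourierSq_zero, AddChar.zero_apply, Complex.one_re] at htrivial
  have hbalance : θ * (Fintype.card G * T.card) = (T.card : ℝ) ^ 4 / 2 := by
    rw [hθ]
    field_simp
  linarith [pow_pos hTcard 4, mul_nonneg hθ0 (sq_nonneg (T.card : ℝ))]

end Bogolyubov

section OrderCompression

variable {Λ E : Type*} [AddCommGroup Λ] [NormedAddCommGroup E]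

/-- The elements of `Λ` whose coordinate vector has norm at most `r`. -/
def coordBall (x : Λ →+ E) (r : ℝ) : Set Λ :=
  {v | ‖x v‖ ≤ r}

/-- `f` respects those sums whose summands and value all lie in `B`. -/
def IsPartialAddHom {M : Type*} [Add M] (f : Λ → M) (B : Set Λ) : Prop :=
  ∀ ⦃u⦄, u ∈ B → ∀ ⦃v⦄, v ∈ B → u + v ∈ B → f (u + v) = f u + f v

/-- `ψ` embeds the finite unit ball of the coordinate map `x` into `ℝ`, partially respecting
addition. It induces the order that is to be compressed. -/
structure IsBallEmbedding (x : Λ →+ E) (ψ : Λ → ℝ) : Prop where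
  finite : (coordBall x 1).Finite
  isPartialAddHom : IsPartialAddHom ψ (coordBall x 1)
  eq_zero_of_map_eq_zero : ∀ ⦃u⦄, u ∈ coordBall x 1 → ψ u = 0 → u = 0

section CoordBall

variable {x : Λ →+ E} {r s q : ℝ} {u v : Λ}

lemma mem_coordBall : v ∈ coordBall x r ↔ ‖x v‖ ≤ r := Iff.rfl

lemma coordBall_mono (h : r ≤ s) : coordBall x r ⊆ coordBall x s :=
  fun _ hv ↦ le_trans hv h

lemma zero_mem_coordBall (hr : 0 ≤ r) : (0 : Λ) ∈ coordBall x r := by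
  simpa [mem_coordBall] using hr

lemma neg_mem_coordBall (hv : v ∈ coordBall x r) : -v ∈ coordBall x r := by
  simpa [mem_coordBall] using hv

lemma add_mem_coordBall (hu : u ∈ coordBall x r) (hv : v ∈ coordBall x s) (h : r + s ≤ q) :
    u + v ∈ coordBall x q := by
  rw [mem_coordBall, map_add]
  exact (norm_add_le _ _).trans ((add_le_add hu hv).trans h)

lemma sub_mem_coordBall (hu : u ∈ coordBall x r) (hv : v ∈ coordBall x s) (h : r + s ≤ q) :
    u - v ∈ coordBall x q :=
  sub_eq_add_neg u v ▸ add_mem_coordBall hu (neg_mem_coordBall hv) h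

end CoordBall

lemma IsPartialAddHom.map_zero {M : Type*} [AddGroup M] {f : Λ → M} {B : Set Λ}
    (hf : IsPartialAddHom f B) (h0 : (0 : Λ) ∈ B) : f 0 = 0 := by
  simpa using hf h0 h0 (by simpa using h0)

variable {x : Λ →+ E} {ψ : Λ → ℝ} {e : Λ}

namespace IsBallEmbedding

lemma map_zero (hψ : IsBallEmbedding x ψ) : ψ 0 = 0 :=
  hψ.isPartialAddHom.map_zero (zero_mem_coordBall zero_le_one)

lemma map_neg (hψ : IsBallEmbedding x ψ) {u : Λ} (hu : u ∈ coordBall x 1) :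
    ψ (-u) = -ψ u := by
  have h := hψ.isPartialAddHom hu (neg_mem_coordBall hu)
    (by simpa using zero_mem_coordBall zero_le_one)
  rw [add_neg_cancel, hψ.map_zero] at h
  linarith

end IsBallEmbedding

variable [NormedSpace ℝ E] {τ : E →ₗ[ℝ] ℝ}

lemma zsmul_mem_coordBall {r : ℝ} {j : ℤ} (h : |(j : ℝ)| * ‖x e‖ ≤ r) :
    j • e ∈ coordBall x r := by
  rwa [mem_coordBall, map_zsmul, ← Int.cast_smul_eq_zsmul ℝ, norm_smul, Real.norm_eq_abs]

namespace IsBallEmbedding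

lemma map_nsmul (hψ : IsBallEmbedding x ψ) {n : ℕ} (hn : n * ‖x e‖ ≤ 1) :
    ψ (n • e) = n * ψ e := by
  have mem_ball (k : ℕ) (hk : k ≤ n) : k • e ∈ coordBall x 1 := by
    rw [← natCast_zsmul]
    refine zsmul_mem_coordBall (le_trans ?_ hn)
    rw [Int.cast_natCast, Nat.abs_cast]
    gcongr
  induction n with
  | zero => simp [hψ.map_zero]
  | succ n ih =>
    have hn' : n * ‖x e‖ ≤ 1 := le_trans (by gcongr; simp) hn
    have he : e ∈ coordBall x 1 := by simpa using mem_ball 1 (by simp)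
    rw [succ_nsmul, hψ.isPartialAddHom (mem_ball n (by simp)) he
      (by simpa [succ_nsmul] using mem_ball (n + 1) le_rfl),
      ih hn' fun k hk ↦ mem_ball k (hk.trans n.le_succ)]
    push_cast
    ring

lemma map_zsmul (hψ : IsBallEmbedding x ψ) {j : ℤ} (hj : |(j : ℝ)| * ‖x e‖ ≤ 1) :
    ψ (j • e) = j * ψ e := by
  obtain ⟨n, rfl | rfl⟩ := j.eq_nat_or_neg
  · simpa using hψ.map_nsmul (by simpa using hj)
  · have hn : n * ‖x e‖ ≤ 1 := by simpa using hj
    rw [neg_zsmul, hψ.map_neg (zsmul_mem_coordBall (by simpa using hn)), natCast_zsmul,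
      hψ.map_nsmul hn]
    simp

-- Otherwise all multiples of `e` would lie in the finite unit ball.
lemma norm_pos (hψ : IsBallEmbedding x ψ) (he : 0 < ψ e) : 0 < ‖x e‖ := by
  by_contra! h
  have hx : ‖x e‖ = 0 := le_antisymm h (norm_nonneg _)
  have hinj : Function.Injective fun n : ℕ ↦ n • e := fun a b hab ↦ by
    have hab' : (a : ℝ) * ψ e = b * ψ e := by
      rw [← hψ.map_nsmul (by simp [hx]), ← hψ.map_nsmul (by simp [hx])]
      exact congrArg ψ hab
    exact_mod_cast mul_right_cancel₀ he.ne' hab'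
  refine Set.infinite_of_injective_forall_mem hinj (fun n ↦ ?_) hψ.finite
  rw [← natCast_zsmul]
  exact zsmul_mem_coordBall (by simp [hx])

end IsBallEmbedding

/-- The data for one step of the dimension reduction: `e` minimises `ψ` among the short vectors
on which it is positive, and `τ` is a functional supporting the ball at `x e`. -/
structure IsPivot (x : Λ →+ E) (ψ : Λ → ℝ) (e : Λ) (τ : E →ₗ[ℝ] ℝ) : Prop where
  pivot_mem : e ∈ coordBall x (1 / 4)
  pos : 0 < ψ e
  le_of_pos : ∀ ⦃u⦄, u ∈ coordBall x (1 / 4) → 0 < ψ u → ψ e ≤ ψ u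
  map_eq_one : τ (x e) = 1
  abs_mul_norm_le : ∀ y, |τ y| * ‖x e‖ ≤ ‖y‖

lemma IsBallEmbedding.exists_isPivot (hψ : IsBallEmbedding x ψ)
    (h : ∃ u ∈ coordBall x (1 / 4), 0 < ψ u) : ∃ e τ, IsPivot x ψ e τ := by
  obtain ⟨e, ⟨he, hpos⟩, hmin⟩ := Set.exists_min_image
    {u | u ∈ coordBall x (1 / 4) ∧ 0 < ψ u} ψ
    (hψ.finite.subset fun u hu ↦ coordBall_mono (by norm_num) hu.1) h
  have hnorm := hψ.norm_pos hpos
  obtain ⟨g, hg, hge⟩ := exists_dual_vector ℝ (x e) hnorm.ne'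
  refine ⟨e, ‖x e‖⁻¹ • (g : E →ₗ[ℝ] ℝ), he, hpos, fun u hu hu' ↦ hmin u ⟨hu, hu'⟩, ?_, fun y ↦ ?_⟩
  · simpa [hge] using inv_mul_cancel₀ hnorm.ne'
  · have hgy : |g y| ≤ ‖y‖ := by simpa [hg] using g.le_opNorm y
    simpa [abs_mul, mul_right_comm, inv_mul_cancel₀ hnorm.ne'] using hgy

/-- Coordinates on `Λ ⧸ ⟨e⟩`: project along `x e` onto the kernel of `τ`. The factor `8` makes the
new unit ball lift into the old ball of radius `1 / 4`. -/
noncomputable def quotientCoord (x : Λ →+ E) (h : τ (x e) = 1) :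
    Λ ⧸ AddSubgroup.zmultiples e →+ τ.ker :=
  QuotientAddGroup.lift _
    ((((8 : ℝ) • (LinearMap.id - τ.smulRight (x e))).codRestrict τ.ker
      fun y ↦ by simp [h]).toAddMonoidHom.comp x)
    (by
      rw [AddSubgroup.zmultiples_le, AddMonoidHom.mem_ker]
      ext
      simp [h])

lemma coe_quotientCoord_mk (h : τ (x e) = 1) (v : Λ) :
    (quotientCoord x h v : E) = (8 : ℝ) • (x v - τ (x v) • x e) := rfl

/-- The representative of `w` modulo `e` whose `τ`-coordinate is at most `1 / 2` in size. -/
noncomputable def quotientLift (x : Λ →+ E) (τ : E →ₗ[ℝ] ℝ)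
    (w : Λ ⧸ AddSubgroup.zmultiples e) : Λ :=
  w.out - round (τ (x w.out)) • e

/-- The function induced by `ψ` on `Λ ⧸ ⟨e⟩` after removing its component along `e`. -/
noncomputable def quotientFun (x : Λ →+ E) (ψ : Λ → ℝ) (τ : E →ₗ[ℝ] ℝ)
    (w : Λ ⧸ AddSubgroup.zmultiples e) : ℝ :=
  ψ (quotientLift x τ w) - τ (x (quotientLift x τ w)) * ψ e

lemma mk_quotientLift (x : Λ →+ E) (τ : E →ₗ[ℝ] ℝ) (w : Λ ⧸ AddSubgroup.zmultiples e) :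
    ((quotientLift x τ w : Λ) : Λ ⧸ AddSubgroup.zmultiples e) = w := by
  have h : ((round (τ (x w.out)) • e : Λ) : Λ ⧸ AddSubgroup.zmultiples e) = 0 :=
    (QuotientAddGroup.eq_zero_iff _).2 ⟨_, rfl⟩
  rw [quotientLift, QuotientAddGroup.mk_sub, h, sub_zero, QuotientAddGroup.out_eq']

lemma quotientLift_injective (x : Λ →+ E) (τ : E →ₗ[ℝ] ℝ) :
    Function.Injective (quotientLift (e := e) x τ) :=
  Function.LeftInverse.injective (mk_quotientLift x τ)

namespace IsPivot

lemma abs_map_quotientLift_le (h : IsPivot x ψ e τ) (w : Λ ⧸ AddSubgroup.zmultiples e) :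
    |τ (x (quotientLift x τ w))| ≤ 1 / 2 := by
  simpa [quotientLift, h.map_eq_one] using abs_sub_round (τ (x w.out))

lemma norm_pos (h : IsPivot x ψ e τ) : 0 < ‖x e‖ := by
  refine norm_pos_iff.2 fun h0 ↦ ?_
  simpa [h0] using h.map_eq_one

lemma quotientLift_mem (h : IsPivot x ψ e τ) {w : Λ ⧸ AddSubgroup.zmultiples e}
    (hw : w ∈ coordBall (quotientCoord x h.map_eq_one) 1) :
    quotientLift x τ w ∈ coordBall x (1 / 4) := by
  set v := quotientLift x τ w
  have hproj : 8 * ‖x v - τ (x v) • x e‖ ≤ 1 := by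
    rw [mem_coordBall, ← mk_quotientLift x τ w, Submodule.coe_norm,
      coe_quotientCoord_mk, norm_smul] at hw
    simpa using hw
  have halong : ‖τ (x v) • x e‖ ≤ 1 / 2 * (1 / 4) := by
    rw [norm_smul]
    exact mul_le_mul (h.abs_map_quotientLift_le w) h.pivot_mem (norm_nonneg _) (by norm_num)
  have := norm_le_norm_sub_add (x v) (τ (x v) • x e)
  change ‖x v‖ ≤ 1 / 4
  linarith

lemma mk_mem_coordBall (h : IsPivot x ψ e τ) {u : Λ} {r : ℝ} (hu : u ∈ coordBall x (r / 16)) :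
    (u : Λ ⧸ AddSubgroup.zmultiples e) ∈ coordBall (quotientCoord x h.map_eq_one) r := by
  have hu' : ‖x u‖ ≤ r / 16 := hu
  have halong : ‖τ (x u) • x e‖ ≤ ‖x u‖ := by
    rw [norm_smul]
    exact h.abs_mul_norm_le _
  have := norm_sub_le (x u) (τ (x u) • x e)
  rw [mem_coordBall, Submodule.coe_norm, coe_quotientCoord_mk, norm_smul,
    Real.norm_eq_abs, abs_of_pos (by norm_num)]
  linarith

lemma eq_zero_of_abs_lt (h : IsPivot x ψ e τ) (hψ : IsBallEmbedding x ψ) {u : Λ}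
    (hu : u ∈ coordBall x (1 / 4)) (hlt : |ψ u| < ψ e) : u = 0 := by
  have hu1 : u ∈ coordBall x 1 := coordBall_mono (by norm_num) hu
  refine hψ.eq_zero_of_map_eq_zero hu1 (le_antisymm ?_ ?_) <;> by_contra! hne
  · exact absurd (h.le_of_pos hu hne) (not_le.2 (lt_of_abs_lt hlt))
  · have := h.le_of_pos (neg_mem_coordBall hu) (by rw [hψ.map_neg hu1]; linarith)
    rw [hψ.map_neg hu1] at this
    linarith [neg_lt_of_abs_lt hlt]

lemma quotientFun_mk (h : IsPivot x ψ e τ) (hψ : IsBallEmbedding x ψ) {v : Λ}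
    (hv : v ∈ coordBall x (1 / 2))
    (hv' : (v : Λ ⧸ AddSubgroup.zmultiples e) ∈ coordBall (quotientCoord x h.map_eq_one) 1) :
    quotientFun x ψ τ (v : Λ ⧸ AddSubgroup.zmultiples e) = ψ v - τ (x v) * ψ e := by
  set s := quotientLift x τ (v : Λ ⧸ AddSubgroup.zmultiples e) with hs
  obtain ⟨j, hj⟩ := (QuotientAddGroup.eq (s := AddSubgroup.zmultiples e)).1
    (mk_quotientLift x τ (v : Λ ⧸ AddSubgroup.zmultiples e))
  have hvs : v = s + j • e := by
    rw [← hs] at hj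
    simpa using (eq_neg_add_iff_add_eq.1 hj).symm
  have hτv : τ (x v) = τ (x s) + j := by
    rw [hvs]
    simp [h.map_eq_one]
  have hj1 : |(j : ℝ)| * ‖x e‖ ≤ 1 := by
    have h1 := h.abs_mul_norm_le (x v)
    have h2 : |τ (x s)| * ‖x e‖ ≤ 1 / 2 * (1 / 4) :=
      mul_le_mul (h.abs_map_quotientLift_le _) h.pivot_mem (norm_nonneg _) (by norm_num)
    have h3 : |(j : ℝ)| ≤ |τ (x v)| + |τ (x s)| := by
      rw [show (j : ℝ) = τ (x v) - τ (x s) by rw [hτv]; ring]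
      exact abs_sub _ _
    have hv2 : ‖x v‖ ≤ 1 / 2 := hv
    nlinarith [mul_le_mul_of_nonneg_right h3 (norm_nonneg (x e))]
  have hadd := hψ.isPartialAddHom (coordBall_mono (by norm_num) (h.quotientLift_mem hv'))
    (zsmul_mem_coordBall hj1) (by rw [← hs, ← hvs]; exact coordBall_mono (by norm_num) hv)
  rw [← hs, ← hvs, hψ.map_zsmul hj1] at hadd
  rw [quotientFun, ← hs, hadd, hτv]
  ring

lemma isBallEmbedding_quotient (h : IsPivot x ψ e τ) (hψ : IsBallEmbedding x ψ) :
    IsBallEmbedding (quotientCoord x h.map_eq_one) (quotientFun x ψ τ) where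
  finite := by
    refine Set.Finite.of_finite_image (hψ.finite.subset ?_) (quotientLift_injective x τ).injOn
    rintro _ ⟨w, hw, rfl⟩
    exact coordBall_mono (by norm_num) (h.quotientLift_mem hw)
  isPartialAddHom u hu v hv huv := by
    have hu' := h.quotientLift_mem hu
    have hv' := h.quotientLift_mem hv
    have hsum := add_mem_coordBall hu' hv' (q := 1 / 2) (by norm_num)
    have hmk : ((quotientLift x τ u + quotientLift x τ v : Λ) : Λ ⧸ AddSubgroup.zmultiples e)
        = u + v := by
      rw [QuotientAddGroup.mk_add, mk_quotientLift, mk_quotientLift]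
    have hψsum := hψ.isPartialAddHom (coordBall_mono (by norm_num) hu')
      (coordBall_mono (by norm_num) hv') (coordBall_mono (by norm_num) hsum)
    rw [← hmk, h.quotientFun_mk hψ hsum (hmk ▸ huv), hψsum, map_add, map_add, quotientFun,
      quotientFun]
    ring
  eq_zero_of_map_eq_zero u hu h0 := by
    have hτ := h.abs_map_quotientLift_le u
    have hlt : |ψ (quotientLift x τ u)| < ψ e := by
      rw [sub_eq_zero.1 h0, abs_mul, abs_of_pos h.pos]
      nlinarith [h.pos]
    rw [← mk_quotientLift x τ u, h.eq_zero_of_abs_lt hψ (h.quotientLift_mem hu) hlt,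
      QuotientAddGroup.mk_zero]

-- Each point of the new ball lifts to about `1 / (2 * ‖x e‖)` points of the old one,
-- translating by multiples of `e`.
lemma ncard_quotient_le (h : IsPivot x ψ e τ) (hψ : IsBallEmbedding x ψ) :
    ((coordBall (quotientCoord x h.map_eq_one) 1).ncard : ℝ) ≤
      2 * ‖x e‖ * (coordBall x 1).ncard := by
  have ht := h.norm_pos
  set J := ⌊1 / (2 * ‖x e‖)⌋₊
  have hmaps : ∀ p ∈ coordBall (quotientCoord x h.map_eq_one) 1 ×ˢ (Finset.range (J + 1) : Set ℕ),
      quotientLift x τ p.1 + p.2 • e ∈ coordBall x 1 := fun ⟨w, n⟩ ⟨hw, hn⟩ ↦ by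
    have hn' : (n : ℝ) ≤ 1 / (2 * ‖x e‖) := Nat.le_floor_iff (by positivity) |>.1
      (Nat.lt_succ_iff.1 (Finset.mem_range.1 hn))
    rw [le_div_iff₀ (by positivity)] at hn'
    have hne : n • e ∈ coordBall x (1 / 2) := by
      rw [← natCast_zsmul]
      exact zsmul_mem_coordBall (by rw [Int.cast_natCast, Nat.abs_cast]; linarith)
    exact add_mem_coordBall (h.quotientLift_mem hw) hne (by norm_num)
  have hinj : Function.Injective fun p : (Λ ⧸ AddSubgroup.zmultiples e) × ℕ ↦
      quotientLift x τ p.1 + p.2 • e := by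
    rintro ⟨v, m⟩ ⟨w, n⟩ hvw
    have hmk (k : ℕ) : ((k • e : Λ) : Λ ⧸ AddSubgroup.zmultiples e) = 0 :=
      (QuotientAddGroup.eq_zero_iff _).2 (nsmul_mem (AddSubgroup.mem_zmultiples e) k)
    obtain rfl : v = w := by
      simpa [mk_quotientLift, hmk] using
        congrArg (QuotientAddGroup.mk (s := AddSubgroup.zmultiples e)) hvw
    have hmn := congrArg (fun u ↦ τ (x u)) (add_left_cancel hvw)
    simpa [h.map_eq_one] using hmn
  have hcard := Set.ncard_le_ncard_of_injOn _ hmaps hinj.injOn hψ.finite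
  rw [Set.ncard_prod, Set.ncard_coe_finset, Finset.card_range] at hcard
  have hJ : 1 / (2 * ‖x e‖) ≤ J + 1 := (Nat.lt_floor_add_one _).le
  rw [← div_le_iff₀' (by positivity), div_eq_mul_one_div]
  exact (mul_le_mul_of_nonneg_left hJ (Nat.cast_nonneg _)).trans (mod_cast hcard)

lemma exists_eq_zsmul_or_le (h : IsPivot x ψ e τ) (hψ : IsBallEmbedding x ψ) {u : Λ}
    (hu : u ∈ coordBall x (1 / 16)) (hpos : 0 < ψ u) :
    (∃ j : ℤ, 1 ≤ j ∧ u = j • e) ∨ ψ e / 8 ≤ ψ u * ‖x e‖ := by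
  refine or_iff_not_imp_right.2 fun hlt ↦ ?_
  push Not at hlt
  set j := ⌊ψ u / ψ e⌋
  have hj_le : j * ψ e ≤ ψ u := (le_div_iff₀ h.pos).1 (Int.floor_le _)
  have hlt_j : ψ u < (j + 1) * ψ e := (div_lt_iff₀ h.pos).1 (Int.lt_floor_add_one _)
  have hj0 : 0 ≤ j := Int.floor_nonneg.2 (div_pos hpos h.pos).le
  have hjt : |(j : ℝ)| * ‖x e‖ ≤ 1 / 8 := by
    rw [abs_of_nonneg (mod_cast hj0)]
    refine le_of_mul_le_mul_left (a := ψ e) ?_ h.pos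
    linarith [mul_le_mul_of_nonneg_right hj_le h.norm_pos.le]
  have hdiff : u - j • e ∈ coordBall x (1 / 4) :=
    sub_mem_coordBall hu (zsmul_mem_coordBall hjt) (by norm_num)
  have hadd := hψ.isPartialAddHom (coordBall_mono (by norm_num) hdiff)
    (zsmul_mem_coordBall (hjt.trans (by norm_num)))
    (by rw [sub_add_cancel]; exact coordBall_mono (by norm_num) hu)
  rw [sub_add_cancel, hψ.map_zsmul (hjt.trans (by norm_num))] at hadd
  have huj : u = j • e := sub_eq_zero.1 <| h.eq_zero_of_abs_lt hψ hdiff <| by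
    rw [abs_lt]
    constructor <;> linarith [h.pos]
  refine ⟨j, Int.add_one_le_iff.2 (hj0.lt_of_ne ?_), huj⟩
  intro hj
  rw [huj, ← hj, zero_zsmul, hψ.map_zero] at hpos
  exact hpos.false

end IsPivot

/-- A partially additive function on the ball of radius `r` which spreads out the elements with
`ψ u > 0` at unit distance, while taking values of size at most `N`. -/
structure IsCompression (x : Λ →+ E) (ψ : Λ → ℝ) (r N : ℝ) (h : Λ → ℝ) : Prop where
  isPartialAddHom : IsPartialAddHom h (coordBall x r)
  one_le : ∀ ⦃u⦄, u ∈ coordBall x r → 0 < ψ u → 1 ≤ h u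
  abs_le : ∀ ⦃u⦄, u ∈ coordBall x r → |h u| ≤ N

lemma IsPivot.abs_map_le (h : IsPivot x ψ e τ) (hψ : IsBallEmbedding x ψ) {u : Λ}
    (hu : u ∈ coordBall x 1) : |τ (x u)| ≤ 2 * (coordBall x 1).ncard := by
  have hcard : (1 : ℝ) ≤ 2 * ‖x e‖ * (coordBall x 1).ncard :=
    le_trans (mod_cast (Set.ncard_pos (h.isBallEmbedding_quotient hψ).finite).2
      ⟨0, zero_mem_coordBall zero_le_one⟩) (h.ncard_quotient_le hψ)
  refine le_of_mul_le_mul_right ?_ h.norm_pos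
  linarith [h.abs_mul_norm_le (x u), mem_coordBall.1 hu]

lemma IsPivot.one_le_div_norm_add {r N : ℝ} {h' : Λ ⧸ AddSubgroup.zmultiples e → ℝ}
    (h : IsPivot x ψ e τ) (hψ : IsBallEmbedding x ψ) (hr0 : 0 ≤ r) (hr : r ≤ 1)
    (hh' : IsCompression (quotientCoord x h.map_eq_one) (quotientFun x ψ τ) r N h') {u : Λ}
    (hu : u ∈ coordBall x (r / 16)) (hpos : 0 < ψ u) : 1 ≤ h' u / ‖x e‖ + τ (x u) := by
  have hτ : |τ (x u) * ‖x e‖| ≤ 1 / 16 := by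
    rw [abs_mul, abs_norm]
    exact (h.abs_mul_norm_le _).trans (le_trans hu (by linarith))
  rw [abs_le] at hτ
  obtain ⟨j, hj, rfl⟩ | hsep :=
    h.exists_eq_zsmul_or_le hψ (coordBall_mono (by linarith) hu) hpos
  · have hmk : ((j • e : Λ) : Λ ⧸ AddSubgroup.zmultiples e) = 0 :=
      (QuotientAddGroup.eq_zero_iff _).2 ⟨j, rfl⟩
    have h0 := hh'.isPartialAddHom.map_zero (zero_mem_coordBall hr0)
    simpa [hmk, h0, h.map_eq_one] using mod_cast hj
  · have hquot : 0 < quotientFun x ψ τ (u : Λ ⧸ AddSubgroup.zmultiples e) := by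
      rw [h.quotientFun_mk hψ (coordBall_mono (by linarith) hu)
        (coordBall_mono hr (h.mk_mem_coordBall hu))]
      refine pos_of_mul_pos_left ?_ h.norm_pos.le
      linarith [mul_le_mul_of_nonneg_right hτ.2 h.pos.le, h.pos]
    have hpivot : ‖x e‖ ≤ 1 / 4 := h.pivot_mem
    have hquot_le := hh'.one_le (h.mk_mem_coordBall hu) hquot
    rw [div_add' _ _ _ h.norm_pos.ne', one_le_div h.norm_pos]
    linarith

lemma IsPivot.isCompression {r C : ℝ} {h' : Λ ⧸ AddSubgroup.zmultiples e → ℝ}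
    (h : IsPivot x ψ e τ) (hψ : IsBallEmbedding x ψ) (hr0 : 0 ≤ r) (hr : r ≤ 1) (hC : 1 ≤ C)
    (hh' : IsCompression (quotientCoord x h.map_eq_one) (quotientFun x ψ τ) r
      (C * (coordBall (quotientCoord x h.map_eq_one) 1).ncard) h') :
    IsCompression x ψ (r / 16) (6 * C * (coordBall x 1).ncard)
      fun u ↦ h' u / ‖x e‖ + τ (x u) where
  isPartialAddHom u hu v hv huv := by
    have := hh'.isPartialAddHom (h.mk_mem_coordBall hu) (h.mk_mem_coordBall hv)
      (h.mk_mem_coordBall huv)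
    simp only [QuotientAddGroup.mk_add, map_add, this]
    ring
  one_le _ := h.one_le_div_norm_add hψ hr0 hr hh'
  abs_le u hu := by
    have hτ := h.abs_map_le hψ (coordBall_mono (by linarith) hu)
    have hquot : |h' u / ‖x e‖| ≤ C * (2 * (coordBall x 1).ncard) := by
      rw [abs_div, abs_norm, div_le_iff₀ h.norm_pos]
      calc |h' u| ≤ C * (coordBall (quotientCoord x h.map_eq_one) 1).ncard :=
            hh'.abs_le (h.mk_mem_coordBall hu)
        _ ≤ C * (2 * ‖x e‖ * (coordBall x 1).ncard) := by
            gcongr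
            exact h.ncard_quotient_le hψ
        _ = C * (2 * (coordBall x 1).ncard) * ‖x e‖ := by ring
    calc |h' u / ‖x e‖ + τ (x u)|
        ≤ C * (2 * (coordBall x 1).ncard) + 2 * (coordBall x 1).ncard :=
          (abs_add_le _ _).trans (add_le_add hquot hτ)
      _ ≤ 6 * C * (coordBall x 1).ncard := by
          nlinarith [(Nat.cast_nonneg (coordBall x 1).ncard : (0 : ℝ) ≤ _)]

/-- The radius of the ball on which an order in dimension `d` can be compressed. -/
noncomputable def compressionRadius (d : ℕ) : ℝ :=
  1 / (4 * 16 ^ d)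

lemma compressionRadius_pos (d : ℕ) : 0 < compressionRadius d := by
  unfold compressionRadius
  positivity

lemma compressionRadius_le (d : ℕ) : compressionRadius d ≤ 1 / 4 := by
  refine one_div_le_one_div_of_le (by norm_num) ?_
  linarith [one_le_pow₀ (by norm_num : (1 : ℝ) ≤ 16) (n := d)]

lemma compressionRadius_succ (d : ℕ) : compressionRadius (d + 1) = compressionRadius d / 16 := by
  rw [compressionRadius, compressionRadius, pow_succ, div_div, mul_assoc]

theorem IsBallEmbedding.exists_isCompression [FiniteDimensional ℝ E] (hψ : IsBallEmbedding x ψ) :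
    ∃ h, IsCompression x ψ (compressionRadius (Module.finrank ℝ E))
      (6 ^ Module.finrank ℝ E * (coordBall x 1).ncard) h := by
  induction hd : Module.finrank ℝ E using Nat.strong_induction_on generalizing Λ E with
  | _ d ih =>
    by_cases hpos : ∃ u ∈ coordBall x (1 / 4), 0 < ψ u
    · obtain ⟨e, τ, h⟩ := hψ.exists_isPivot hpos
      have hτ : τ ≠ 0 := fun h0 ↦ by simpa [h0] using h.map_eq_one
      obtain rfl := hd.symm.trans (Module.Dual.finrank_ker_add_one_of_ne_zero hτ).symm
      obtain ⟨h', hh'⟩ := ih _ (Nat.lt_succ_self _) (h.isBallEmbedding_quotient hψ) rfl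
      refine ⟨fun u ↦ h' u / ‖x e‖ + τ (x u), ?_⟩
      rw [compressionRadius_succ, pow_succ']
      exact h.isCompression hψ (compressionRadius_pos _).le
        ((compressionRadius_le _).trans (by norm_num)) (one_le_pow₀ (by norm_num)) hh'
    · push Not at hpos
      refine ⟨0, fun _ _ _ _ _ ↦ by simp, fun u hu hu' ↦ absurd hu' (not_lt.2 ?_), fun u _ ↦ ?_⟩
      · exact hpos u (coordBall_mono (compressionRadius_le _) hu)
      · simp only [Pi.zero_apply, abs_zero]
        positivity

end OrderCompression

section ModelLemma

lemma mem_nsmul_iff_exists_multiset {M : Type*} [AddCommMonoid M] [DecidableEq M] {s : Finset M}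
    {n : ℕ} {x : M} :
    x ∈ n • s ↔ ∃ S : Multiset M, (∀ y ∈ S, y ∈ s) ∧ S.card = n ∧ S.sum = x := by
  rw [Finset.mem_nsmul]
  constructor
  · rintro ⟨f, rfl⟩
    exact ⟨List.ofFn fun i ↦ (f i : M), by simp, by simp, by simp⟩
  · rintro ⟨S, hS, rfl, rfl⟩
    induction S using Quotient.inductionOn with
    | h l => exact ⟨fun i ↦ ⟨l.get i, hS _ (List.get_mem l i)⟩, by simp⟩

lemma exists_card_le_mul_card_fiber {α β : Type*} [DecidableEq β] {s : Finset α} {t : Finset β}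
    {f : α → β} (ht : t.Nonempty) (hf : ∀ a ∈ s, f a ∈ t) :
    ∃ b ∈ t, s.card ≤ t.card * (s.filter fun a ↦ f a = b).card := by
  by_contra! h
  have hlt := Finset.sum_lt_sum_of_nonempty ht h
  rw [← Finset.mul_sum, ← Finset.card_eq_sum_card_fiberwise hf, Finset.sum_const,
    smul_eq_mul] at hlt
  exact hlt.false

-- A bad `q` is a quotient `m * k / d` with `|m * k| < p`, so there are fewer than `p` of them.
lemma exists_dilation {p m : ℕ} [Fact p.Prime] {X : Finset (ZMod p)} (hX : 0 ∉ X)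
    (hm : 2 * X.card < m) : ∃ q : ZMod p, ∀ d ∈ X, ∀ D : ℤ, |D| < p → (D : ZMod p) = q * d →
      ¬ (m : ℤ) ∣ D := by
  have hp : 1 < p := (Fact.out : p.Prime).one_lt
  set L := (p - 1) / m
  let quotients : Finset (ZMod p) := Finset.image₂ (fun (k : ℤ) d ↦ ((m * k : ℤ) : ZMod p) / d)
    ((Finset.Icc (-L : ℤ) L).erase 0) X
  have hcard : (insert 0 quotients).card < (Finset.univ : Finset (ZMod p)).card := by
    have hIcc : ((Finset.Icc (-L : ℤ) L).erase 0).card = 2 * L := by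
      rw [Finset.card_erase_of_mem (by simp), Int.card_Icc]
      omega
    have hquot : quotients.card ≤ 2 * L * X.card := hIcc ▸ Finset.card_image₂_le _ _ _
    have hL : L * m ≤ p - 1 := Nat.div_mul_le_self _ _
    have hprod : L * (2 * X.card + 1) ≤ L * m := Nat.mul_le_mul_left L hm
    have hins := Finset.card_insert_le 0 quotients
    rw [Finset.card_univ, ZMod.card]
    rcases L.eq_zero_or_pos with hL0 | hL0
    · simp only [hL0, mul_zero, zero_mul] at hquot
      omega
    · have : 2 * L * X.card + L ≤ p - 1 := by linarith
      omega
  obtain ⟨q, -, hq⟩ := Finset.exists_mem_notMem_of_card_lt_card hcard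
  rw [Finset.mem_insert, not_or] at hq
  refine ⟨q, fun d hd D hDp hDq ⟨k, hDk⟩ ↦ ?_⟩
  have hd0 : d ≠ 0 := fun h ↦ hX (h ▸ hd)
  refine hq.2 (Finset.mem_image₂.2 ⟨k, ?_, d, hd, ?_⟩)
  · rw [Finset.mem_erase, Finset.mem_Icc, ← abs_le, Int.abs_eq_natAbs]
    refine ⟨?_, ?_⟩
    · rintro rfl
      simp [hDk, hq.1, hd0, eq_comm] at hDq
    · rw [Int.abs_eq_natAbs, hDk, Int.natAbs_mul, Int.natAbs_natCast] at hDp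
      rw [Nat.cast_le, Nat.le_div_iff_mul_le (by omega), mul_comm]
      exact Nat.le_sub_one_of_lt (mod_cast hDp)
  · rw [← hDk, hDq, mul_div_cancel_right₀ _ hd0]

lemma exists_prime_intCast_ne_zero (X : Finset ℤ) (hX : 0 ∉ X) :
    ∃ p : ℕ, p.Prime ∧ ∀ d ∈ X, (d : ZMod p) ≠ 0 := by
  obtain ⟨p, hp, hprime⟩ := Nat.exists_infinite_primes (X.sup Int.natAbs + 1)
  refine ⟨p, hprime, fun d hd h0 ↦ ?_⟩
  have hle : d.natAbs ≤ X.sup Int.natAbs := Finset.le_sup hd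
  have hdvd := Int.natAbs_dvd_natAbs.2 ((ZMod.intCast_zmod_eq_zero_iff_dvd _ _).1 h0)
  refine absurd (Nat.le_of_dvd (Int.natAbs_pos.2 fun h ↦ hX (h ▸ hd)) hdvd) ?_
  rw [Int.natAbs_natCast]
  omega

lemma sum_div_eq_of_card_mul_div_eq {S : Multiset ℕ} {l p : ℕ} (hp : 0 < p) (hS : S ≠ 0)
    (hl : ∀ x ∈ S, S.card * x / p = l) : S.sum / p = l := by
  have hcard : 0 < S.card := Multiset.card_pos.2 hS
  have hcell (x : ℕ) : x / p = l ↔ l * p ≤ x ∧ x ≤ (l + 1) * p - 1 := by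
    rw [Nat.div_eq_iff hp, add_one_mul]
  have hmap : ∀ y ∈ S.map (S.card * ·), l * p ≤ y ∧ y ≤ (l + 1) * p - 1 := by
    intro y hy
    obtain ⟨x, hx, rfl⟩ := Multiset.mem_map.1 hy
    exact (hcell _).1 (hl x hx)
  have hlower := Multiset.card_nsmul_le_sum fun y hy ↦ (hmap y hy).1
  have hupper := Multiset.sum_le_card_nsmul _ _ fun y hy ↦ (hmap y hy).2
  rw [Multiset.card_map, Multiset.sum_map_mul_left, Multiset.map_id', smul_eq_mul] at hlower hupper
  exact (hcell _).2 ⟨Nat.le_of_mul_le_mul_left hlower hcard,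
    Nat.le_of_mul_le_mul_left hupper hcard⟩

lemma abs_sub_lt_of_div_eq {a b p : ℕ} (hp : 0 < p) (h : a / p = b / p) :
    |(a : ℤ) - b| < p := by
  have ha := Nat.mod_add_div a p
  have hb := Nat.mod_add_div b p
  have ha' := Nat.mod_lt a hp
  have hb' := Nat.mod_lt b hp
  rw [h] at ha
  rw [abs_sub_lt_iff]
  omega

/-- The least nonnegative residue of `q * a` modulo `p`. -/
def dilatedResidue {p : ℕ} (q : ZMod p) (a : ℤ) : ℕ :=
  (q * a : ZMod p).val

lemma natCast_sum_dilatedResidue {p : ℕ} [NeZero p] (q : ZMod p) (S : Multiset ℤ) :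
    ((S.map (dilatedResidue q)).sum : ZMod p) = q * (S.sum : ℤ) := by
  induction S using Multiset.induction with
  | empty => simp
  | cons a S ih => simp [ih, dilatedResidue, mul_add]

lemma isAddFreimanIso_dilatedResidue {p s m l : ℕ} [NeZero p] {q : ZMod p} {A : Finset ℤ}
    (hs : s ≠ 0) (hl : ∀ a ∈ A, s * dilatedResidue q a / p = l)
    (hq : ∀ d ∈ s • A - s • A, d ≠ 0 → ∀ D : ℤ, |D| < p → (D : ZMod p) = q * d → ¬ (m : ℤ) ∣ D) :
    IsAddFreimanIso s A ((fun a ↦ (dilatedResidue q a : ZMod m)) '' A)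
      fun a ↦ (dilatedResidue q a : ZMod m) := by
  have hiff {S T : Multiset ℤ} (hS : ∀ a ∈ S, a ∈ A) (hT : ∀ a ∈ T, a ∈ A)
      (hScard : S.card = s) (hTcard : T.card = s) :
      (S.map fun a ↦ (dilatedResidue q a : ZMod m)).sum =
        (T.map fun a ↦ (dilatedResidue q a : ZMod m)).sum ↔ S.sum = T.sum := by
    set D : ℤ := (S.map (dilatedResidue q)).sum - (T.map (dilatedResidue q)).sum with hD
    have hcell {U : Multiset ℤ} (hU : ∀ a ∈ U, a ∈ A) (hUcard : U.card = s) :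
        (U.map (dilatedResidue q)).sum / p = l := by
      refine sum_div_eq_of_card_mul_div_eq (NeZero.pos p) ?_ ?_
      · rw [← Multiset.card_pos, Multiset.card_map, hUcard]
        exact Nat.pos_of_ne_zero hs
      · simpa [hUcard] using fun a ha ↦ hl a (hU a ha)
    have hDlt : |D| < p := abs_sub_lt_of_div_eq (NeZero.pos p)
      ((hcell hS hScard).trans (hcell hT hTcard).symm)
    have hDq : (D : ZMod p) = q * (S.sum - T.sum : ℤ) := by
      rw [hD, Int.cast_sub, Int.cast_natCast, Int.cast_natCast, natCast_sum_dilatedResidue,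
        natCast_sum_dilatedResidue, ← mul_sub, Int.cast_sub]
    have hDm : (S.map fun a ↦ (dilatedResidue q a : ZMod m)).sum =
        (T.map fun a ↦ (dilatedResidue q a : ZMod m)).sum ↔ (m : ℤ) ∣ D := by
      rw [← ZMod.intCast_zmod_eq_zero_iff_dvd, hD]
      simp [sub_eq_zero, Multiset.map_map]
    rw [hDm]
    refine ⟨fun hdvd ↦ ?_, fun heq ↦ ?_⟩
    · by_contra hne
      exact hq _ (Finset.sub_mem_sub (mem_nsmul_iff_exists_multiset.2 ⟨S, hS, hScard, rfl⟩)
        (mem_nsmul_iff_exists_multiset.2 ⟨T, hT, hTcard, rfl⟩)) (sub_ne_zero.2 hne) D hDlt hDq hdvd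
    · rw [heq, sub_self, Int.cast_zero, mul_zero, ZMod.intCast_zmod_eq_zero_iff_dvd] at hDq
      rw [Int.eq_zero_of_abs_lt_dvd hDq hDlt]
      exact dvd_zero _
  refine ⟨Set.InjOn.bijOn_image fun a ha b hb hab ↦ ?_, fun S T hS hT ↦ hiff hS hT⟩
  have hrep := hiff (S := Multiset.replicate s a) (T := Multiset.replicate s b)
    (fun c hc ↦ Multiset.eq_of_mem_replicate hc ▸ ha)
    (fun c hc ↦ Multiset.eq_of_mem_replicate hc ▸ hb) (by simp) (by simp)
  simp only [Multiset.map_replicate, Multiset.sum_replicate] at hrep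
  exact smul_right_injective ℤ hs (hrep.1 (congrArg (s • ·) hab))

-- Compose three maps: reduction modulo a large prime `p`, a dilation of `ZMod p`, and reduction
-- modulo `m` of least nonnegative residues. When `[0, p)` is cut into `s` intervals, the sums of
-- `s` residues from one of them differ by less than `p`, so the last map loses nothing there.
theorem exists_isAddFreimanIso_zmod {A : Finset ℤ} {s m : ℕ} (hs : s ≠ 0)
    (hm : 2 * (s • A - s • A).card < m) :
    ∃ A₁ ⊆ A, A.card ≤ s * A₁.card ∧
      ∃ φ : ℤ → ZMod m, IsAddFreimanIso s A₁ (φ '' A₁) φ := by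
  set X := (s • A - s • A).erase 0 with hX
  obtain ⟨p, hp, hpX⟩ := exists_prime_intCast_ne_zero X (by simp [hX])
  have : Fact p.Prime := ⟨hp⟩
  have hXcard : 2 * (X.image ((↑) : ℤ → ZMod p)).card < m := by
    have h₁ : (X.image ((↑) : ℤ → ZMod p)).card ≤ X.card := Finset.card_image_le
    have h₂ : X.card ≤ (s • A - s • A).card := Finset.card_erase_le
    omega
  obtain ⟨q, hq⟩ := exists_dilation (by simpa using hpX) hXcard
  obtain ⟨l, -, hl⟩ := exists_card_le_mul_card_fiber (s := A) (t := Finset.range s)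
    (f := fun a ↦ s * dilatedResidue q a / p) (by simpa using hs) fun a _ ↦ by
      rw [Finset.mem_range, Nat.div_lt_iff_lt_mul hp.pos]
      exact Nat.mul_lt_mul_of_pos_left (ZMod.val_lt _) (Nat.pos_of_ne_zero hs)
  rw [Finset.card_range] at hl
  have hsub := Finset.filter_subset (fun a ↦ s * dilatedResidue q a / p = l) A
  refine ⟨_, hsub, hl, _, isAddFreimanIso_dilatedResidue hs
    (fun a ha ↦ (Finset.mem_filter.1 ha).2) fun d hd hd0 ↦ hq d (Finset.mem_image_of_mem _ ?_)⟩
  exact Finset.mem_erase.2 ⟨hd0, Finset.sub_subset_sub (Finset.nsmul_subset_nsmul_left hsub)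
    (Finset.nsmul_subset_nsmul_left hsub) hd⟩

end ModelLemma

section BohrLattice

lemma eq_of_fourierChar_eq {a b : ℝ} (h : Real.fourierChar a = Real.fourierChar b)
    (hab : |a - b| < 1) : a = b := by
  rw [Real.fourierChar_apply', Real.fourierChar_apply', Circle.exp_eq_exp] at h
  obtain ⟨k, hk⟩ := h
  have hdiff : a - b = k := by
    have := Real.two_pi_pos.ne'
    field_simp at hk
    linarith
  rw [hdiff, ← Int.cast_abs] at hab
  have hk0 : k = 0 := Int.abs_lt_one_iff.1 (mod_cast hab)
  rwa [hk0, Int.cast_zero, sub_eq_zero] at hdiff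

lemma exists_fourierChar_eq {z : ℂ} (hz : ‖z‖ = 1) :
    ∃ θ ∈ Set.Ico (0 : ℝ) 1, (Real.fourierChar θ : ℂ) = z := by
  refine ⟨Int.fract (z.arg / (2 * Real.pi)), ⟨Int.fract_nonneg _, Int.fract_lt_one _⟩, ?_⟩
  have hexp : Real.fourierChar (Int.fract (z.arg / (2 * Real.pi))) = Circle.exp z.arg := by
    rw [Real.fourierChar_apply', Circle.exp_eq_exp]
    refine ⟨-⌊z.arg / (2 * Real.pi)⌋, ?_⟩
    rw [← Int.self_sub_floor]
    push_cast
    field_simp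
    ring
  simpa [hexp, hz] using Complex.norm_mul_exp_arg_mul_I z

lemma re_fourierChar_nonneg {θ : ℝ} (hθ : |θ| ≤ 1 / 4) : 0 ≤ (Real.fourierChar θ : ℂ).re := by
  rw [Real.fourierChar_apply, Complex.exp_ofReal_mul_I_re]
  obtain ⟨hlower, hupper⟩ := abs_le.1 hθ
  exact Real.cos_nonneg_of_mem_Icc ⟨by nlinarith [Real.pi_pos], by nlinarith [Real.pi_pos]⟩

variable {G : Type*} [AddCommGroup G]

/-- The group elements together with a choice of real phase of each character in `Γ`. Its elements
with small phases are the elements of a Bohr set. -/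
def bohrLattice (Γ : Finset (AddChar G ℂ)) : AddSubgroup (G × (Γ → ℝ)) where
  carrier := {v | ∀ χ : Γ, χ.1 v.1 = Real.fourierChar (v.2 χ)}
  zero_mem' χ := by simp
  add_mem' hu hv χ := by simp [AddChar.map_add_eq_mul, hu χ, hv χ]
  neg_mem' hu χ := by simp [AddChar.map_neg_eq_inv, hu χ]

/-- The phases of an element of the Bohr lattice, scaled so that in the unit ball every character
has nonnegative real part. -/
def bohrCoord (Γ : Finset (AddChar G ℂ)) : bohrLattice Γ →+ (Γ → ℝ) :=
  (4 : ℕ) • (AddMonoidHom.snd G (Γ → ℝ)).comp (bohrLattice Γ).subtype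

variable {Γ : Finset (AddChar G ℂ)}

lemma bohrCoord_apply (v : bohrLattice Γ) (χ : Γ) : bohrCoord Γ v χ = 4 * v.1.2 χ := by
  simp [bohrCoord]

lemma mem_coordBall_bohrCoord {r : ℝ} (hr : 0 ≤ r) {v : bohrLattice Γ} :
    v ∈ coordBall (bohrCoord Γ) r ↔ ∀ χ, |v.1.2 χ| ≤ r / 4 := by
  simp only [mem_coordBall, pi_norm_le_iff_of_nonneg hr, bohrCoord_apply, Real.norm_eq_abs,
    abs_mul, Nat.abs_ofNat, le_div_iff₀' (zero_lt_four' ℝ)]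

lemma re_nonneg_of_mem_coordBall {v : bohrLattice Γ} (hv : v ∈ coordBall (bohrCoord Γ) 1)
    {χ : AddChar G ℂ} (hχ : χ ∈ Γ) : 0 ≤ (χ v.1.1).re := by
  rw [v.2 ⟨χ, hχ⟩]
  exact re_fourierChar_nonneg ((mem_coordBall_bohrCoord zero_le_one).1 hv _)

lemma injOn_fst_coordBall :
    Set.InjOn (fun v : bohrLattice Γ ↦ v.1.1) (coordBall (bohrCoord Γ) 1) := by
  intro u hu v hv huv
  refine Subtype.ext (Prod.ext huv (funext fun χ ↦ eq_of_fourierChar_eq ?_ ?_))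
  · apply Circle.ext
    rw [← u.2 χ, ← v.2 χ]
    exact congrArg χ.1 huv
  · have hu' := (mem_coordBall_bohrCoord zero_le_one).1 hu χ
    have hv' := (mem_coordBall_bohrCoord zero_le_one).1 hv χ
    linarith [abs_sub (u.1.2 χ) (v.1.2 χ)]

variable [Finite G]

lemma finite_coordBall_bohrCoord : (coordBall (bohrCoord Γ) 1).Finite :=
  Set.Finite.of_finite_image (Set.toFinite _) injOn_fst_coordBall

lemma ncard_coordBall_bohrCoord_le : (coordBall (bohrCoord Γ) 1).ncard ≤ Nat.card G := by
  rw [← Set.ncard_univ]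
  exact Set.ncard_le_ncard_of_injOn _ (fun _ _ ↦ Set.mem_univ _) injOn_fst_coordBall

lemma exists_mem_bohrLattice (Γ : Finset (AddChar G ℂ)) (g : G) :
    ∃ v : bohrLattice Γ, v.1.1 = g ∧ ∀ χ, v.1.2 χ ∈ Set.Ico (0 : ℝ) 1 := by
  choose θ hθ hχ using fun χ : Γ ↦ exists_fourierChar_eq (AddChar.norm_apply χ.1 g)
  exact ⟨⟨(g, θ), fun χ ↦ (hχ χ).symm⟩, rfl, hθ⟩

lemma abs_sub_le_of_floor_eq {n : ℕ} (hn : n ≠ 0) {a b : ℝ} (ha : 0 ≤ a) (hb : 0 ≤ b)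
    (h : ⌊n * a⌋₊ = ⌊n * b⌋₊) : |a - b| ≤ 1 / n := by
  have hn' : (0 : ℝ) < n := mod_cast hn.bot_lt
  have hfloor := Nat.floor_le (mul_nonneg hn'.le ha)
  have hfloor' := Nat.floor_le (mul_nonneg hn'.le hb)
  have hlt := Nat.lt_floor_add_one (n * a)
  have hlt' := Nat.lt_floor_add_one (n * b)
  rw [h] at hfloor hlt
  rw [le_div_iff₀ hn', ← abs_of_pos hn', ← abs_mul, abs_le]
  constructor <;> linarith

theorem exists_lift_sub_mem_coordBall {α : Type*} (Γ : Finset (AddChar G ℂ)) (s : Finset α)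
    (φ : α → G) {n : ℕ} (hn : n ≠ 0) :
    ∃ t ⊆ s, s.card ≤ n ^ Γ.card * t.card ∧ ∃ L : α → bohrLattice Γ, (∀ a, (L a).1.1 = φ a) ∧
      ∀ a ∈ t, ∀ b ∈ t, L a - L b ∈ coordBall (bohrCoord Γ) (4 / n) := by
  choose L hLφ hL using fun a ↦ exists_mem_bohrLattice Γ (φ a)
  obtain ⟨cell, -, hcell⟩ := exists_card_le_mul_card_fiber (s := s)
    (t := Fintype.piFinset fun _ : Γ ↦ Finset.range n) (f := fun a χ ↦ ⌊n * (L a).1.2 χ⌋₊)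
    ⟨fun _ ↦ 0, Fintype.mem_piFinset.2 fun _ ↦ Finset.mem_range.2 hn.bot_lt⟩ fun a _ ↦ by
      refine Fintype.mem_piFinset.2 fun χ ↦ Finset.mem_range.2 ?_
      rw [Nat.floor_lt (mul_nonneg n.cast_nonneg (hL a χ).1)]
      exact mul_lt_of_lt_one_right (mod_cast hn.bot_lt) (hL a χ).2
  refine ⟨_, s.filter_subset _, by simpa using hcell, L, hLφ, fun a ha b hb ↦ ?_⟩
  rw [mem_coordBall_bohrCoord (by positivity)]
  intro χ
  rw [div_right_comm, div_self four_ne_zero]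
  refine abs_sub_le_of_floor_eq hn (hL a χ).1 (hL b χ).1 ?_
  exact congrFun ((Finset.mem_filter.1 ha).2.trans (Finset.mem_filter.1 hb).2.symm) χ

end BohrLattice

section DifferenceExtension

variable {α β : Type*} [AddCommGroup α] [AddCommGroup β] [DecidableEq α] [DecidableEq β]
  {φ : α → β} {A : Finset α}

/-- The differences of pairs of points on the graph of `φ` over `A`. Their iterated sumsets track
which differences in the domain and in the image correspond under a Freiman isomorphism. -/
def graphDiff (φ : α → β) (A : Finset α) : Finset (α × β) :=
  (A.image fun a ↦ (a, φ a)) - A.image fun a ↦ (a, φ a)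

lemma sub_mem_graphDiff {a b : α} (ha : a ∈ A) (hb : b ∈ A) :
    (a - b, φ a - φ b) ∈ graphDiff φ A :=
  Finset.sub_mem_sub (Finset.mem_image_of_mem _ ha) (Finset.mem_image_of_mem _ hb)

lemma nsmul_graphDiff_mono (hA : A.Nonempty) {m n : ℕ} (hmn : m ≤ n) :
    m • graphDiff φ A ⊆ n • graphDiff φ A := by
  obtain ⟨a, ha⟩ := hA
  exact Finset.nsmul_subset_nsmul_right (by simpa using! sub_mem_graphDiff (φ := φ) ha ha) hmn

lemma neg_mem_nsmul_graphDiff {n : ℕ} {z : α × β} (hz : z ∈ n • graphDiff φ A) :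
    -z ∈ n • graphDiff φ A := by
  simpa only [graphDiff, ← neg_nsmul, neg_sub] using Finset.neg_mem_neg hz

lemma exists_multiset_of_mem_nsmul_graph {n : ℕ} {z : α × β}
    (hz : z ∈ n • A.image fun a ↦ (a, φ a)) :
    ∃ S : Multiset α, (∀ ⦃a⦄, a ∈ S → a ∈ A) ∧ S.card = n ∧ z = (S.sum, (S.map φ).sum) := by
  obtain ⟨S, hS, rfl, rfl⟩ := mem_nsmul_iff_exists_multiset.1 hz
  have hgraph : ∀ p ∈ S, p.1 ∈ A ∧ φ p.1 = p.2 := by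
    intro p hp
    obtain ⟨a, ha, rfl⟩ := Finset.mem_image.1 (hS p hp)
    exact ⟨ha, rfl⟩
  refine ⟨S.map Prod.fst, ?_, S.card_map _, Prod.ext ?_ ?_⟩
  · intro a ha
    obtain ⟨p, hp, rfl⟩ := Multiset.mem_map.1 ha
    exact (hgraph p hp).1
  · exact map_multiset_sum (AddMonoidHom.fst α β) S
  · have hmap : (S.map Prod.fst).map φ = S.map Prod.snd := by
      rw [Multiset.map_map]
      exact Multiset.map_congr rfl fun p hp ↦ (hgraph p hp).2
    rw [hmap]
    exact map_multiset_sum (AddMonoidHom.snd α β) S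

lemma fst_eq_zero_iff_snd_eq_zero {n : ℕ} (hφ : IsAddFreimanIso n A (φ '' A) φ) {z : α × β}
    (hz : z ∈ n • graphDiff φ A) : z.1 = 0 ↔ z.2 = 0 := by
  rw [graphDiff, nsmul_sub] at hz
  obtain ⟨u, hu, v, hv, rfl⟩ := Finset.mem_sub.1 hz
  obtain ⟨S, hSA, hS, rfl⟩ := exists_multiset_of_mem_nsmul_graph hu
  obtain ⟨R, hRA, hR, rfl⟩ := exists_multiset_of_mem_nsmul_graph hv
  simpa [sub_eq_zero] using (hφ.map_sum_eq_map_sum hSA hRA hS hR).symm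

-- The relation involves three elements of `2 • graphDiff φ A`, hence at most six differences.
lemma fst_eq_add_of_snd_eq_add (hφ : IsAddFreimanIso 6 A (φ '' A) φ) {z w y : α × β}
    (hz : z ∈ 2 • graphDiff φ A) (hw : w ∈ 2 • graphDiff φ A) (hy : y ∈ 2 • graphDiff φ A)
    (h : y.2 = z.2 + w.2) : y.1 = z.1 + w.1 := by
  have hmem : y + (-z + -w) ∈ (2 + (2 + 2)) • graphDiff φ A := by
    rw [add_nsmul, add_nsmul]
    exact Finset.add_mem_add hy
      (Finset.add_mem_add (neg_mem_nsmul_graphDiff hz) (neg_mem_nsmul_graphDiff hw))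
  have hzero := (fst_eq_zero_iff_snd_eq_zero hφ hmem).2 (by simp [h]; abel)
  simpa [add_eq_zero_iff_eq_neg, neg_add_rev, add_comm] using hzero

lemma exists_mem_two_nsmul_graphDiff {u : β}
    (hu : u ∈ A.image φ + A.image φ - A.image φ - A.image φ) :
    ∃ z ∈ 2 • graphDiff φ A, z.2 = u := by
  simp only [Finset.mem_sub, Finset.mem_add, Finset.mem_image] at hu
  obtain ⟨_, ⟨_, ⟨_, ⟨a, ha, rfl⟩, _, ⟨b, hb, rfl⟩, rfl⟩, _, ⟨c, hc, rfl⟩, rfl⟩, _, ⟨d, hd, rfl⟩,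
    rfl⟩ := hu
  refine ⟨_, two_nsmul (graphDiff φ A) ▸
    Finset.add_mem_add (sub_mem_graphDiff ha hc) (sub_mem_graphDiff hb hd), ?_⟩
  simp only [Prod.snd_add]
  abel

end DifferenceExtension

theorem exists_extension_of_isAddFreimanIso {α β : Type*} [AddCommGroup α] [AddCommGroup β]
    [DecidableEq β] {φ : α → β} {A : Finset α} (hφ : IsAddFreimanIso 6 A (φ '' A) φ)
    (hA : A.Nonempty) {W : Set β}
    (hW : ∀ u ∈ W, u ∈ A.image φ + A.image φ - A.image φ - A.image φ) :
    ∃ ψ : β → α, (∀ a ∈ A, ∀ b ∈ A, ψ (φ a - φ b) = a - b) ∧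
      IsPartialAddHom ψ W ∧ ∀ u ∈ W, ψ u = 0 → u = 0 := by
  classical
  choose! inv hinv hinv2 using fun u (hu : ∃ z ∈ 2 • graphDiff φ A, z.2 = u) ↦ hu
  replace hW := fun u hu ↦ exists_mem_two_nsmul_graphDiff (hW u hu)
  refine ⟨fun u ↦ (inv u).1, fun a ha b hb ↦ ?_, fun u hu v hv huv ↦ ?_, fun u hu h0 ↦ ?_⟩
  · have hmem : (a - b, φ a - φ b) ∈ 2 • graphDiff φ A :=
      nsmul_graphDiff_mono hA one_le_two (by simpa using sub_mem_graphDiff ha hb)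
    have hzero : (0 : α × β) ∈ 2 • graphDiff φ A :=
      nsmul_graphDiff_mono hA two_pos.le (by simp)
    have hex : ∃ z ∈ 2 • graphDiff φ A, z.2 = φ a - φ b := ⟨_, hmem, rfl⟩
    simpa using fst_eq_add_of_snd_eq_add hφ hmem hzero (hinv _ hex) (by simpa using hinv2 _ hex)
  · replace hu := hW u hu
    replace hv := hW v hv
    replace huv := hW _ huv
    exact fst_eq_add_of_snd_eq_add hφ (hinv _ hu) (hinv _ hv) (hinv _ huv)
      (by rw [hinv2 _ hu, hinv2 _ hv, hinv2 _ huv])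
  · replace hu := hW u hu
    rw [← hinv2 _ hu]
    refine (fst_eq_zero_iff_snd_eq_zero hφ ?_).1 h0
    exact nsmul_graphDiff_mono hA (by norm_num) (hinv _ hu)

section SeparatedEmbedding

/-- `f` is a Freiman homomorphism on `A` with values in `[0, N]`, and increases by at least `1` from
each element of `A` to the next. -/
structure IsSeparatedEmbedding (A : Finset ℤ) (N : ℝ) (f : ℤ → ℝ) : Prop where
  isAddFreimanHom : IsAddFreimanHom 2 A Set.univ f
  add_one_le : ∀ ⦃a⦄, a ∈ A → ∀ ⦃b⦄, b ∈ A → a < b → f a + 1 ≤ f b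
  mem_Icc : ∀ ⦃a⦄, a ∈ A → f a ∈ Set.Icc 0 N

lemma IsSeparatedEmbedding.mono {A : Finset ℤ} {M N : ℝ} {f : ℤ → ℝ}
    (hf : IsSeparatedEmbedding A M f) (hMN : M ≤ N) : IsSeparatedEmbedding A N f where
  isAddFreimanHom := hf.isAddFreimanHom
  add_one_le := hf.add_one_le
  mem_Icc _ ha := Set.Icc_subset_Icc_right hMN (hf.mem_Icc ha)

theorem IsCompression.exists_isSeparatedEmbedding {Λ E : Type*} [AddCommGroup Λ]
    [NormedAddCommGroup E] {x : Λ →+ E} {ψ h : Λ → ℝ} {r N : ℝ} (hh : IsCompression x ψ r N h)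
    (hψ : IsBallEmbedding x ψ) (hr : r ≤ 1 / 4) {A : Finset ℤ} {L : ℤ → Λ}
    (hL : ∀ a ∈ A, ∀ b ∈ A, L a - L b ∈ coordBall x r)
    (hψL : ∀ a ∈ A, ∀ b ∈ A, ψ (L a - L b) = a - b) :
    ∃ f, IsSeparatedEmbedding A (2 * N) f := by
  obtain rfl | ⟨o, ho⟩ := A.eq_empty_or_nonempty
  · exact ⟨0, isAddFreimanHom_two.2 ⟨by simp, by simp⟩, by simp, by simp⟩
  have hsub {a b : ℤ} (ha : a ∈ A) (hb : b ∈ A) :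
      h (L a - L o) = h (L a - L b) + h (L b - L o) := by
    have := hh.isPartialAddHom (hL a ha b hb) (hL b hb o ho)
      (by rw [sub_add_sub_cancel]; exact hL a ha o ho)
    rwa [sub_add_sub_cancel] at this
  have hparallel {a b c d : ℤ} (ha : a ∈ A) (hb : b ∈ A) (hc : c ∈ A) (hd : d ∈ A)
      (habcd : a + b = c + d) : L a - L c = L d - L b := by
    have hac := hL a ha c hc
    have hdb := hL d hd b hb
    have hu := sub_mem_coordBall hac hdb (by linarith : r + r ≤ 1)
    have hψadd := hψ.isPartialAddHom hu (coordBall_mono (by linarith) hdb)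
      (by rw [sub_add_cancel]; exact coordBall_mono (by linarith) hac)
    rw [sub_add_cancel, hψL a ha c hc, hψL d hd b hb] at hψadd
    have hcast : (a : ℝ) + b = c + d := mod_cast habcd
    exact sub_eq_zero.1 (hψ.eq_zero_of_map_eq_zero hu (by linarith))
  refine ⟨fun a ↦ h (L a - L o) + N, isAddFreimanHom_two.2 ⟨fun _ _ ↦ Set.mem_univ _, ?_⟩,
    fun a ha b hb hab ↦ ?_, fun a ha ↦ ?_⟩
  · intro a ha b hb c hc d hd habcd
    linarith [hsub ha hc, hsub hd hb, congrArg h (hparallel ha hb hc hd habcd)]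
  · have hone : 1 ≤ h (L b - L a) := hh.one_le (hL b hb a ha)
      (by rw [hψL b hb a ha]; exact sub_pos.2 (mod_cast hab))
    linarith [hsub hb ha]
  · have hle := hh.abs_le (hL a ha o ho)
    constructor <;> linarith [neg_le_of_abs_le hle, le_of_abs_le hle]

variable {G : Type*} [AddCommGroup G]

lemma isBallEmbedding_bohrCoord [Finite G] {Γ : Finset (AddChar G ℂ)} {ψ : G → ℤ}
    (hadd : IsPartialAddHom ψ ((fun v : bohrLattice Γ ↦ v.1.1) '' coordBall (bohrCoord Γ) 1))
    (hzero : ∀ v ∈ coordBall (bohrCoord Γ) 1, ψ v.1.1 = 0 → v.1.1 = 0) :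
    IsBallEmbedding (bohrCoord Γ) fun v ↦ (ψ v.1.1 : ℝ) where
  finite := finite_coordBall_bohrCoord
  isPartialAddHom u hu v hv huv := by
    have := hadd (Set.mem_image_of_mem _ hu) (Set.mem_image_of_mem _ hv)
      (Set.mem_image_of_mem _ huv)
    exact congrArg (Int.cast : ℤ → ℝ) this |>.trans (Int.cast_add _ _)
  eq_zero_of_map_eq_zero v hv hv0 :=
    injOn_fst_coordBall hv (zero_mem_coordBall zero_le_one) (hzero v hv (mod_cast hv0))

theorem exists_isSeparatedEmbedding_of_isAddFreimanIso [Fintype G] [DecidableEq G] {A : Finset ℤ}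
    (hA : A.Nonempty) {φ : ℤ → G} (hφ : IsAddFreimanIso 6 A (φ '' A) φ) {d : ℕ}
    (hd : (largeSpectrum (A.image φ)).card ≤ d) :
    ∃ A₁ ⊆ A, A.card ≤ (4 * (4 * 16 ^ d)) ^ d * A₁.card ∧
      ∃ f, IsSeparatedEmbedding A₁ (2 * (6 ^ d * Fintype.card G)) f := by
  set Γ := largeSpectrum (A.image φ)
  obtain ⟨ψ, hψsub, hψadd, hψzero⟩ := exists_extension_of_isAddFreimanIso hφ hA
    (W := (fun v : bohrLattice Γ ↦ v.1.1) '' coordBall (bohrCoord Γ) 1) (by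
      rintro _ ⟨v, hv, rfl⟩
      exact mem_add_sub_sub_of_re_nonneg (hA.image φ) fun χ hχ ↦ re_nonneg_of_mem_coordBall hv hχ)
  have hψ := isBallEmbedding_bohrCoord hψadd fun v hv ↦ hψzero _ (Set.mem_image_of_mem _ hv)
  obtain ⟨h, hh⟩ := hψ.exists_isCompression
  obtain ⟨A₁, hA₁, hcard, L, hLφ, hL⟩ := exists_lift_sub_mem_coordBall Γ A φ
    (by positivity : 4 * (4 * 16 ^ d) ≠ 0)
  have hradius : 4 / ((4 * (4 * 16 ^ d) : ℕ) : ℝ) ≤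
      compressionRadius (Module.finrank ℝ (Γ → ℝ)) := by
    rw [Module.finrank_fintype_fun_eq_card, Fintype.card_coe, compressionRadius]
    push_cast
    rw [div_mul_cancel_left₀ four_ne_zero, ← one_div]
    gcongr
    norm_num
  have hψL : ∀ a ∈ A₁, ∀ b ∈ A₁, (ψ (L a - L b).1.1 : ℝ) = a - b := by
    intro a ha b hb
    rw [← Int.cast_sub, ← hψsub a (hA₁ ha) b (hA₁ hb), ← hLφ, ← hLφ]
    rfl
  obtain ⟨f, hf⟩ := hh.exists_isSeparatedEmbedding hψ (compressionRadius_le _)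
    (fun a ha b hb ↦ coordBall_mono hradius (hL a ha b hb)) hψL
  refine ⟨A₁, hA₁, hcard.trans ?_, f, hf.mono ?_⟩
  · gcongr
    exact Nat.succ_le_of_lt (by positivity)
  · rw [Module.finrank_fintype_fun_eq_card, Fintype.card_coe, ← Nat.card_eq_fintype_card]
    gcongr
    · norm_num
    · exact ncard_coordBall_bohrCoord_le

lemma card_largeSpectrum_le [Fintype G] {T : Finset G} (hT : T.Nonempty) {κ : ℝ}
    (hκ : (Fintype.card G : ℝ) ≤ κ * T.card) : ((largeSpectrum T).card : ℝ) ≤ 2 * κ ^ 2 := by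
  have hTcard : (0 : ℝ) < T.card := mod_cast hT.card_pos
  refine le_of_mul_le_mul_right ?_ (pow_pos hTcard 2)
  calc ((largeSpectrum T).card : ℝ) * (T.card : ℝ) ^ 2
      ≤ 2 * (Fintype.card G : ℝ) ^ 2 := card_largeSpectrum_mul_le T
    _ ≤ 2 * (κ * T.card) ^ 2 := by gcongr
    _ = 2 * κ ^ 2 * (T.card : ℝ) ^ 2 := by ring

lemma card_nsmul_sub_nsmul_le [DecidableEq G] {A : Finset G} (hA : A.Nonempty) {K : ℝ}
    (hK : ((A + A).card : ℝ) ≤ K * A.card) (m n : ℕ) :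
    ((m • A - n • A).card : ℝ) ≤ K ^ (m + n) * A.card := by
  have hAcard : (0 : ℝ) < A.card := mod_cast hA.card_pos
  calc ((m • A - n • A).card : ℝ)
      ≤ ((A + A).card / A.card : ℝ) ^ (m + n) * A.card := by
        simpa using (NNRat.cast_le (K := ℝ)).2
          (Finset.pluennecke_ruzsa_inequality_nsmul_sub_nsmul_add hA A m n)
    _ ≤ K ^ (m + n) * A.card := by
        gcongr
        exact (div_le_iff₀ hAcard).2 hK

theorem exists_isSeparatedEmbedding_of_card_add_le {K : ℝ} (hK : 0 < K) :
    ∃ c C : ℝ, 0 < c ∧ 0 < C ∧ ∀ A : Finset ℤ, A.Nonempty → ((A + A).card : ℝ) ≤ K * A.card →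
      ∃ A₁ ⊆ A, c * A.card ≤ A₁.card ∧ ∃ f, IsSeparatedEmbedding A₁ (C * A.card) f := by
  set d := ⌈648 * K ^ 24⌉₊
  refine ⟨1 / (6 * (4 * (4 * 16 ^ d)) ^ d), 2 * (6 ^ d * (3 * K ^ 12)), by positivity,
    by positivity, fun A hA hAA ↦ ?_⟩
  set D := (6 • A - 6 • A).card
  have hDpos : (1 : ℝ) ≤ D := mod_cast (hA.nsmul.sub hA.nsmul).card_pos
  have hDle : (D : ℝ) ≤ K ^ 12 * A.card := card_nsmul_sub_nsmul_le hA hAA 6 6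
  obtain ⟨A₀, hA₀, hcard₀, φ, hφ⟩ := exists_isAddFreimanIso_zmod (A := A) (m := 2 * D + 1)
    (by norm_num : 6 ≠ 0) (Nat.lt_succ_self _)
  have hA₀ne : A₀.Nonempty := Finset.card_pos.1 (by have := hA.card_pos; omega)
  replace hcard₀ : (A.card : ℝ) ≤ 6 * A₀.card := mod_cast hcard₀
  have hcardG : (Fintype.card (ZMod (2 * D + 1)) : ℝ) ≤ 3 * K ^ 12 * A.card := by
    rw [ZMod.card]
    push_cast
    linarith
  have hd : (largeSpectrum (A₀.image φ)).card ≤ d := by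
    have hκ : (Fintype.card (ZMod (2 * D + 1)) : ℝ) ≤ 18 * K ^ 12 * (A₀.image φ).card := by
      rw [Finset.card_image_of_injOn hφ.bijOn.injOn]
      nlinarith [pow_pos hK 12]
    have hlarge := card_largeSpectrum_le (hA₀ne.image φ) hκ
    rw [show 2 * (18 * K ^ 12) ^ 2 = 648 * K ^ 24 by ring] at hlarge
    exact_mod_cast hlarge.trans (Nat.le_ceil _)
  obtain ⟨A₁, hA₁, hcard₁, f, hf⟩ := exists_isSeparatedEmbedding_of_isAddFreimanIso hA₀ne hφ hd
  replace hcard₁ : (A₀.card : ℝ) ≤ (4 * (4 * 16 ^ d)) ^ d * A₁.card := mod_cast hcard₁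
  refine ⟨A₁, hA₁.trans hA₀, ?_, f, hf.mono ?_⟩
  · rw [one_div_mul_eq_div, div_le_iff₀' (by positivity)]
    linarith
  · calc _ ≤ 2 * (6 ^ d * (3 * K ^ 12 * A.card)) := by gcongr
      _ = _ := by ring

end SeparatedEmbedding

section GreedySelection

variable {α : Type*} [LinearOrder α]

/-- The number of elements of `A` below `a`: the zero-based index of `a` in the increasing
enumeration of `A` when `a ∈ A`. -/
def rankIn (A : Finset α) (a : α) : ℕ :=
  (A.filter (· < a)).card

lemma rankIn_insert_of_le {A : Finset α} {a b : α} (hab : a ≤ b) :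
    rankIn (insert b A) a = rankIn A a := by
  rw [rankIn, Finset.filter_insert, if_neg hab.not_gt, rankIn]

lemma rankIn_eq_card {A : Finset α} {b : α} (hb : ∀ a ∈ A, a < b) : rankIn A b = A.card := by
  rw [rankIn, Finset.filter_true_of_mem hb]

lemma rankIn_max' {A : Finset α} (hA : A.Nonempty) : rankIn A (A.max' hA) + 1 = A.card := by
  have hfilter : A.filter (· < A.max' hA) = A.erase (A.max' hA) := by
    ext a
    rw [Finset.mem_filter, Finset.mem_erase, and_comm, and_congr_left_iff]
    exact fun ha ↦ (A.le_max' a ha).lt_iff_ne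
  rw [rankIn, hfilter, Finset.card_erase_add_one (A.max'_mem hA)]

lemma strictMonoOn_rankIn (A : Finset α) : StrictMonoOn (rankIn A) A := fun a ha _ _ hab ↦
  Finset.card_lt_card <| Finset.ssubset_iff_of_subset
    (Finset.monotone_filter_right _ fun _ _ hx ↦ hx.trans hab) |>.2
      ⟨a, Finset.mem_filter.2 ⟨ha, hab⟩, fun h ↦ (Finset.mem_filter.1 h).2.false⟩

lemma rankIn_orderIsoOfFin (A : Finset α) (k : Fin A.card) :
    rankIn A (A.orderIsoOfFin rfl k) = k := by
  have hfilter : A.filter (· < (A.orderIsoOfFin rfl k : α)) =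
      (Finset.Iio k).map (A.orderEmbOfFin rfl).toEmbedding := by
    ext x
    simp only [Finset.mem_filter, Finset.mem_map, Finset.mem_Iio]
    constructor
    · rintro ⟨hx, hlt⟩
      exact ⟨(A.orderIsoOfFin rfl).symm ⟨x, hx⟩, by rwa [OrderIso.symm_apply_lt],
        congrArg Subtype.val ((A.orderIsoOfFin rfl).apply_symm_apply ⟨x, hx⟩)⟩
    · rintro ⟨i, hi, rfl⟩
      exact ⟨A.orderEmbOfFin_mem rfl i, (A.orderEmbOfFin rfl).lt_iff_lt.2 hi⟩
  rw [rankIn, hfilter, Finset.card_map, Fin.card_Iio]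

-- Scan `A` upwards, keeping `b` unless that would give it a rank larger than `g b`. The elements
-- rejected because the rank has caught up share their value of `g` with a kept element.
lemma exists_subset_rankIn_le {A : Finset α} {g : α → ℕ} (hg : MonotoneOn g A) :
    ∃ B ⊆ A, (∀ a ∈ B, rankIn B a ≤ g a) ∧
      ∀ b ∈ A, b ∉ B → ∃ a ∈ B, rankIn B a = g a ∧ g a = g b := by
  induction A using Finset.induction_on_max with
  | empty => exact ⟨∅, by simp⟩
  | insert b A hb ih =>
    obtain ⟨B, hBA, hle, hrej⟩ := ih (hg.mono (by simp))
    have hbB : ∀ a ∈ B, a < b := fun a ha ↦ hb a (hBA ha)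
    by_cases hcard : B.card ≤ g b
    · refine ⟨insert b B, Finset.insert_subset_insert b hBA, ?_, ?_⟩
      · intro a ha
        obtain rfl | ha := Finset.mem_insert.1 ha
        · rwa [rankIn_insert_of_le le_rfl, rankIn_eq_card hbB]
        · rw [rankIn_insert_of_le (hbB a ha).le]
          exact hle a ha
      · intro c hc hcB
        rw [Finset.mem_insert, not_or] at hcB
        obtain ⟨a, ha, hrank, hga⟩ := hrej c (Finset.mem_of_mem_insert_of_ne hc hcB.1) hcB.2
        exact ⟨a, Finset.mem_insert_of_mem ha, by rwa [rankIn_insert_of_le (hbB a ha).le], hga⟩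
    · refine ⟨B, hBA.trans (Finset.subset_insert _ _), hle, fun c hc hcB ↦ ?_⟩
      obtain rfl | hc := Finset.mem_insert.1 hc
      · have hB : B.Nonempty := Finset.card_pos.1 (by omega)
        have hmax := B.max'_mem hB
        have hrank := rankIn_max' hB
        have hrankle := hle _ hmax
        have hgle := hg (Finset.mem_insert_of_mem (hBA hmax)) (Finset.mem_insert_self _ _)
          (hbB _ hmax).le
        exact ⟨_, hmax, by omega, by omega⟩
      · exact hrej c hc hcB

theorem exists_subset_card_le_mul_card_rankIn_eq {A : Finset α} {g : α → ℕ}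
    (hg : MonotoneOn g A) {q M : ℕ} (hq : ∀ n, (A.filter fun a ↦ g a = n).card ≤ q)
    (hM : ∀ a ∈ A, g a ≤ M) :
    ∃ B ⊆ A, A.card ≤ q * (B.filter fun a ↦ rankIn B a = g a).card + M := by
  obtain ⟨B, hBA, hle, hrej⟩ := exists_subset_rankIn_le hg
  refine ⟨B, hBA, ?_⟩
  set good := B.filter fun a ↦ rankIn B a = g a
  set early := B.filter fun a ↦ rankIn B a < g a
  have hearly : early.card ≤ M := by
    rw [← Finset.card_range M]
    refine Finset.card_le_card_of_injOn (rankIn B) (fun a ha ↦ ?_)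
      ((strictMonoOn_rankIn B).injOn.mono (Finset.coe_subset.2 (B.filter_subset _)))
    have ha := Finset.mem_filter.1 ha
    exact Finset.mem_coe.2 (Finset.mem_range.2 (ha.2.trans_le (hM a (hBA ha.1))))
  have hcover : A \ early ⊆ good.biUnion fun a ↦ A.filter fun b ↦ g b = g a := by
    intro b hb
    obtain ⟨hbA, hb⟩ := Finset.mem_sdiff.1 hb
    simp only [good, early, Finset.mem_biUnion, Finset.mem_filter] at hb ⊢
    by_cases hbB : b ∈ B
    · exact ⟨b, ⟨hbB, (hle b hbB).eq_of_not_lt fun h ↦ hb ⟨hbB, h⟩⟩, hbA, rfl⟩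
    · obtain ⟨a, haB, hrank, hga⟩ := hrej b hbA hbB
      exact ⟨a, ⟨haB, hrank⟩, hbA, hga.symm⟩
  calc A.card ≤ (A \ early).card + early.card := Finset.card_le_card_sdiff_add_card
    _ ≤ good.card * q + M :=
        Nat.add_le_add ((Finset.card_le_card hcover).trans
          (Finset.card_biUnion_le_card_mul _ _ _ fun a _ ↦ hq _)) hearly
    _ = q * good.card + M := by rw [mul_comm]

end GreedySelection

section IndexedEnergy

theorem addEnergy_graph_rankIn_le_indexedEnergy (A : Finset ℤ) :
    (A.image fun a ↦ (a, rankIn A a)).addEnergy (A.image fun a ↦ (a, rankIn A a)) ≤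
      indexedEnergy A := by
  set P : Fin A.card → ℤ × ℕ := fun k ↦ (A.orderIsoOfFin rfl k, k)
  have hP : A.image (fun a ↦ (a, rankIn A a)) = Finset.univ.image P := by
    ext z
    simp only [Finset.mem_image, Finset.mem_univ, true_and]
    constructor
    · rintro ⟨a, ha, rfl⟩
      obtain ⟨k, hk⟩ := (A.orderIsoOfFin rfl).surjective ⟨a, ha⟩
      refine ⟨k, ?_⟩
      simp only [P, ← rankIn_orderIsoOfFin, hk]
    · rintro ⟨k, rfl⟩
      exact ⟨_, (A.orderIsoOfFin rfl k).2, by simp only [P, rankIn_orderIsoOfFin]⟩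
  rw [hP]
  refine Finset.card_le_card_of_surjOn (fun q ↦ ((P q.1, P q.2.2.1), P q.2.1, P q.2.2.2)) ?_
  rintro ⟨⟨z₁, z₃⟩, z₂, z₄⟩ hz
  simp only [Finset.coe_filter, Finset.mem_product, Set.mem_ofPred_eq, Finset.mem_image,
    Finset.mem_univ, true_and] at hz
  obtain ⟨⟨⟨⟨i, rfl⟩, k, rfl⟩, ⟨j, rfl⟩, l, rfl⟩, h⟩ := hz
  exact ⟨(i, j, k, l), Finset.mem_filter.2 ⟨Finset.mem_univ _, Prod.ext_iff.1 h⟩, rfl⟩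

lemma floor_add_floor_mem_Icc {x y : ℝ} (hx : 0 ≤ x) (hy : 0 ≤ y) :
    ⌊x⌋₊ + ⌊y⌋₊ ∈ Finset.Icc (⌊x + y⌋₊ - 1) ⌊x + y⌋₊ := by
  rw [Finset.mem_Icc, tsub_le_iff_right, ← Nat.lt_succ_iff]
  constructor
  · rw [Nat.floor_lt (add_nonneg hx hy)]
    push_cast
    linarith [Nat.lt_floor_add_one x, Nat.lt_floor_add_one y]
  · exact Nat.le_floor (by push_cast; exact add_le_add (Nat.floor_le hx) (Nat.floor_le hy))

lemma card_graph_floor_add_le {α : Type*} [AddCommMonoid α] [DecidableEq α] {A : Finset α}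
    {f : α → ℝ} (hf : IsAddFreimanHom 2 (A : Set α) Set.univ f) (hf0 : ∀ a ∈ A, 0 ≤ f a) :
    (A.image (fun a ↦ (a, ⌊f a⌋₊)) + A.image fun a ↦ (a, ⌊f a⌋₊)).card ≤ 2 * (A + A).card := by
  set P := A.image fun a ↦ (a, ⌊f a⌋₊)
  have hP {z : α × ℕ} (hz : z ∈ P + P) :
      ∃ a ∈ A, ∃ b ∈ A, a + b = z.1 ∧ z.2 ∈ Finset.Icc (⌊f a + f b⌋₊ - 1) ⌊f a + f b⌋₊ := by
    simp only [P, Finset.mem_add, Finset.mem_image] at hz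
    obtain ⟨_, ⟨a, ha, rfl⟩, _, ⟨b, hb, rfl⟩, rfl⟩ := hz
    exact ⟨a, ha, b, hb, rfl, floor_add_floor_mem_Icc (hf0 a ha) (hf0 b hb)⟩
  refine Finset.card_le_mul_card_image_of_maps_to (f := Prod.fst) (fun z hz ↦ ?_) 2 fun s hs ↦ ?_
  · obtain ⟨a, ha, b, hb, hab, -⟩ := hP hz
    exact hab ▸ Finset.add_mem_add ha hb
  · obtain ⟨c, hc, d, hd, rfl⟩ := Finset.mem_add.1 hs
    have hsub : ((P + P).filter fun z ↦ z.1 = c + d) ⊆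
        {c + d} ×ˢ Finset.Icc (⌊f c + f d⌋₊ - 1) ⌊f c + f d⌋₊ := by
      intro z hz
      obtain ⟨hzP, hz1⟩ := Finset.mem_filter.1 hz
      obtain ⟨a, ha, b, hb, hab, hz2⟩ := hP hzP
      rw [hf.add_eq_add ha hb hc hd (hab.trans hz1)] at hz2
      exact Finset.mem_product.2 ⟨Finset.mem_singleton.2 hz1, hz2⟩
    refine (Finset.card_le_card hsub).trans ?_
    rw [Finset.card_product, Finset.card_singleton, Nat.card_Icc]
    omega

lemma card_le_ceil_of_add_one_le {α : Type*} [LinearOrder α] {A : Finset α} {f : α → ℝ} {x L : ℝ}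
    (hf : ∀ a ∈ A, ∀ b ∈ A, a < b → f a + 1 ≤ f b) (hL : ∀ a ∈ A, f a ∈ Set.Ico x (x + L)) :
    A.card ≤ ⌈L⌉₊ := by
  have hmono : StrictMonoOn (fun a ↦ ⌊f a - x⌋₊) A := by
    intro a ha b hb hab
    rw [← Nat.succ_le_iff, Nat.succ_eq_add_one, ← Nat.floor_add_one (sub_nonneg.2 (hL a ha).1)]
    exact Nat.floor_mono (by linarith [hf a ha b hb hab])
  rw [← Finset.card_range ⌈L⌉₊]
  refine Finset.card_le_card_of_injOn _ (fun a ha ↦ ?_) hmono.injOn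
  rw [Finset.coe_range, Set.mem_Iio, Nat.floor_lt (sub_nonneg.2 (hL a ha).1)]
  linarith [(hL a ha).2, Nat.le_ceil L]

lemma IsSeparatedEmbedding.card_filter_floor_eq_le {A : Finset ℤ} {N ε : ℝ} {f : ℤ → ℝ}
    (hf : IsSeparatedEmbedding A N f) (hε : 0 < ε) (n : ℕ) :
    (A.filter fun a ↦ ⌊ε * f a⌋₊ = n).card ≤ ⌈1 / ε⌉₊ := by
  refine card_le_ceil_of_add_one_le (f := f) (x := n / ε) (fun a ha b hb ↦ ?_) fun a ha ↦ ?_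
  · exact hf.add_one_le (Finset.mem_filter.1 ha).1 (Finset.mem_filter.1 hb).1
  · obtain ⟨haA, rfl⟩ := Finset.mem_filter.1 ha
    have hpos : 0 ≤ ε * f a := mul_nonneg hε.le (hf.mem_Icc haA).1
    rw [← add_div, Set.mem_Ico, div_le_iff₀' hε, lt_div_iff₀' hε]
    exact ⟨Nat.floor_le hpos, Nat.lt_floor_add_one _⟩

theorem IsSeparatedEmbedding.exists_subset_pow_card_le {A : Finset ℤ} {N ε : ℝ} {f : ℤ → ℝ}
    (hf : IsSeparatedEmbedding A N f) (hε : 0 < ε) :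
    ∃ A' ⊆ A, ∃ B ⊆ A', A.card ≤ ⌈1 / ε⌉₊ * B.card + ⌊ε * N⌋₊ ∧
      B.card ^ 4 ≤ 2 * (B + B).card * indexedEnergy A' := by
  have hmono : MonotoneOn (fun a ↦ ⌊ε * f a⌋₊) A := by
    intro a ha b hb hab
    obtain rfl | hab := hab.eq_or_lt
    · rfl
    · exact Nat.floor_mono (by have := hf.add_one_le ha hb hab; gcongr; linarith)
  obtain ⟨A', hA', hcard⟩ := exists_subset_card_le_mul_card_rankIn_eq hmono
    (hf.card_filter_floor_eq_le hε) (M := ⌊ε * N⌋₊) fun a ha ↦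
      Nat.floor_mono (by gcongr; exact (hf.mem_Icc ha).2)
  set B := A'.filter fun a ↦ rankIn A' a = ⌊ε * f a⌋₊
  have hBA' : B ⊆ A' := A'.filter_subset _
  have hBA : B ⊆ A := hBA'.trans hA'
  refine ⟨A', hA', B, hBA', hcard, ?_⟩
  set P := B.image fun a ↦ (a, ⌊ε * f a⌋₊)
  have hPcard : P.card = B.card :=
    Finset.card_image_of_injective _ fun a b hab ↦ congrArg Prod.fst hab
  have hPrank : P ⊆ A'.image fun a ↦ (a, rankIn A' a) := by
    intro z hz
    obtain ⟨a, ha, rfl⟩ := Finset.mem_image.1 hz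
    obtain ⟨haA', hrank⟩ := Finset.mem_filter.1 ha
    exact Finset.mem_image.2 ⟨a, haA', by rw [hrank]⟩
  have hFreiman : IsAddFreimanHom 2 (B : Set ℤ) Set.univ fun a ↦ ε * f a :=
    ((AddHomClass.isAddFreimanHom (AddMonoidHom.mulLeft ε) (Set.mapsTo_univ _ _)).comp
      hf.isAddFreimanHom).subset (Finset.coe_subset.2 hBA) (Set.mapsTo_univ _ _)
  calc B.card ^ 4 = P.card ^ 2 * P.card ^ 2 := by rw [hPcard]; ring
    _ ≤ (P + P).card * P.addEnergy P := Finset.le_card_add_mul_addEnergy P P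
    _ ≤ 2 * (B + B).card * indexedEnergy A' := by
        gcongr
        · exact card_graph_floor_add_le hFreiman fun a ha ↦
            mul_nonneg hε.le (hf.mem_Icc (hBA ha)).1
        · exact (Finset.addEnergy_mono hPrank hPrank).trans
            (addEnergy_graph_rankIn_le_indexedEnergy A')

theorem exists_dense_subset_pow_card_le {c C : ℝ} (hc : 0 < c) (hC : 0 < C) :
    ∃ γ : ℝ, 0 < γ ∧ ∀ {A : Finset ℤ} {n : ℕ} {f : ℤ → ℝ}, IsSeparatedEmbedding A (C * n) f →
      c * n ≤ A.card → ∃ A' ⊆ A, ∃ B ⊆ A', γ * n ≤ B.card ∧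
        B.card ^ 4 ≤ 2 * (B + B).card * indexedEnergy A' := by
  set ε := c / (2 * C)
  have hε : 0 < ε := by positivity
  refine ⟨c / (2 * ⌈1 / ε⌉₊), by positivity, fun {A n f} hf hA ↦ ?_⟩
  obtain ⟨A', hA', B, hB, hcard, henergy⟩ := hf.exists_subset_pow_card_le hε
  refine ⟨A', hA', B, hB, ?_, henergy⟩
  have hfloor : (⌊ε * (C * n)⌋₊ : ℝ) ≤ c * n / 2 :=
    (Nat.floor_le (by positivity)).trans_eq (by simp only [ε]; field_simp)
  have hcard' : (A.card : ℝ) ≤ ⌈1 / ε⌉₊ * B.card + ⌊ε * (C * n)⌋₊ := mod_cast hcard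
  rw [div_mul_eq_mul_div, div_le_iff₀ (by positivity)]
  linarith

end IndexedEnergy

/-- For every `K > 0` there are `c₁, c₂ > 0` depending only on `K` such that any
finite nonempty `A ⊆ ℤ` with `|A+A| ≤ K|A|` contains a subset `A' ⊆ A` with
`|A'| ≥ c₂|A|` and `EI(A') ≥ c₁|A'|³`. -/
theorem exists_subset_large_indexed_energy :
    ∀ K : ℝ, 0 < K → ∃ c₁ c₂ : ℝ, 0 < c₁ ∧ 0 < c₂ ∧
      ∀ A : Finset ℤ, A.Nonempty → ((A + A).card : ℝ) ≤ K * (A.card : ℝ) →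
        ∃ A' ⊆ A, c₂ * (A.card : ℝ) ≤ (A'.card : ℝ) ∧
          c₁ * (A'.card : ℝ) ^ 3 ≤ (indexedEnergy A' : ℝ) := by
  intro K hK
  obtain ⟨c, C, hc, hC, hembed⟩ := exists_isSeparatedEmbedding_of_card_add_le hK
  obtain ⟨γ, hγ, hselect⟩ := exists_dense_subset_pow_card_le hc hC
  refine ⟨γ ^ 4 / (2 * K), γ, by positivity, hγ, fun A hA hAA ↦ ?_⟩
  obtain ⟨A₁, hA₁, hcard, f, hf⟩ := hembed A hA hAA
  obtain ⟨A', hA', B, hB, hγB, henergy⟩ := hselect hf hcard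
  have hA'A : A' ⊆ A := hA'.trans hA₁
  refine ⟨A', hA'A, hγB.trans (mod_cast Finset.card_le_card hB), ?_⟩
  have hA0 : (0 : ℝ) < A.card := mod_cast hA.card_pos
  have hBA : B ⊆ A := hB.trans hA'A
  have hBB : ((B + B).card : ℝ) ≤ K * A.card :=
    hAA.trans' (mod_cast Finset.card_le_card (Finset.add_subset_add hBA hBA))
  have hcube : γ ^ 4 * (A.card : ℝ) ^ 3 ≤ 2 * K * indexedEnergy A' := by
    refine le_of_mul_le_mul_right ?_ hA0
    calc γ ^ 4 * (A.card : ℝ) ^ 3 * A.card = (γ * A.card) ^ 4 := by ring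
      _ ≤ (B.card : ℝ) ^ 4 := by gcongr
      _ ≤ 2 * (B + B).card * indexedEnergy A' := mod_cast henergy
      _ ≤ 2 * (K * A.card) * indexedEnergy A' := by gcongr
      _ = 2 * K * indexedEnergy A' * A.card := by ring
  rw [div_mul_eq_mul_div, div_le_iff₀' (by positivity)]
  refine hcube.trans' ?_
  gcongr
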